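/- arXiv:1605.08383 — 2 statements merged into one kernel-verified Lean document; each statement's English description precedes it below -/
import Mathlib

section
/- Suppose α : ℕ → ℕ satisfies liminf_{n→∞} α(n) ≥ 4 and limsup_{n→∞} (α(n)/n)·log(n)·(log(log n))² < 1/(12π²e). Then for every z ∈ ℝ, the proportion of permutations σ in S_{n,α} with C(σ) − m_{n,α} ≤ z·√(v_{n,α}) converges, as n → ∞, to Φ(z) = (1/√(2π))∫_{−∞}^z e^{−t²/2} dt, the distribution function of the standard normal distribution. -/
open scoped Classical in
/-- `S_{n,a}`: the set of permutations of `{1,…,n}` all of whose cycles have length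
at most `a`. -/
noncomputable def Snalpha (n a : ℕ) : Finset (Equiv.Perm (Fin n)) :=
  Finset.univ.filter fun σ => ∀ c ∈ σ.cycleType, c ≤ a

/-- `C(σ)`: the total number of cycles of a permutation (nontrivial cycles plus
fixed points). -/
def numCycles {n : ℕ} (σ : Equiv.Perm (Fin n)) : ℕ :=
  σ.cycleType.card + (Finset.univ.filter fun i => σ i = i).card

/-!
Let `Z j`, for `1 ≤ j ≤ a`, be independent Poisson variables of mean `x ^ j / j`, and put
`K = ∑ Z j` and `N = ∑ j * Z j`. Since the cycle polynomials have the exponential generating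
function `exp (w ∑ z ^ j / j)`, the number of cycles of a uniform element of `Snalpha n a` has, for
every `x > 0`, the law of `K` conditioned on `N = n`. Take for `x` the saddle point, where
`𝔼 N = n`. Cauchy's formula on the circle of radius `x` then gives the characteristic function of
`C(σ) - 𝔼 K` as a quotient of integrals over `θ` of the centred characteristic function of `(K, N)`
at `(t, θ)`.

Completing the square in `θ`, that is, regressing `K` on `N`, turns the integrand near its maximum
into a Gaussian, and the variance that remains for `K` is the residual variance, which equals `v`.
Away from the maximum the modulus of the integrand is governed by a geometric sum of ratio
`z = x * exp (i θ)`, which is smaller than the one at `θ = 0` by about the factor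
`(x - 1) / ‖z - 1‖`; this beats the polynomial loss as soon as `α n * log n = o(n)`.
-/

namespace BoundedCycles

open Filter Finset MeasureTheory ProbabilityTheory Real Topology
open scoped Nat

section CyclePolynomial

/-- `w ^ ℓ(p) / z_p` for a partition `p` with parts `s`, where `z_p = ∏ i, i ^ (count i) (count i)!`
is the order of the centralizer of a permutation of cycle type `p`. -/
noncomputable def partitionWeight (w : ℂ) (s : Multiset ℕ) : ℂ :=
  w ^ s.card / (s.prod * ∏ i ∈ s.toFinset, (s.count i)! : ℕ)

/-- The exponential generating coefficient of the cycle polynomial: `n! * cycleCoeff w a n` is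
`∑ w ^ C(σ)` over the permutations `σ` of `n` points all of whose cycles have length at most `a`. -/
noncomputable def cycleCoeff (w : ℂ) (a n : ℕ) : ℂ :=
  ∑ p ∈ Nat.Partition.restricted n (· ≤ a), partitionWeight w p.parts

lemma prod_factorial_count_cons (j : ℕ) (s : Multiset ℕ) :
    ∏ i ∈ (j ::ₘ s).toFinset, ((j ::ₘ s).count i)! =
      (s.count j + 1) * ∏ i ∈ s.toFinset, (s.count i)! := by
  have hj : j ∈ (j ::ₘ s).toFinset := by simp
  have hs : ∏ i ∈ s.toFinset, (s.count i)! = ∏ i ∈ (j ::ₘ s).toFinset, (s.count i)! := by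
    refine prod_subset (by simp [Multiset.toFinset_cons, subset_insert]) fun i _ hi => ?_
    rw [Multiset.count_eq_zero.2 (by simpa using hi), Nat.factorial_zero]
  have hne : ∏ i ∈ (j ::ₘ s).toFinset.erase j, ((j ::ₘ s).count i)! =
      ∏ i ∈ (j ::ₘ s).toFinset.erase j, (s.count i)! :=
    prod_congr rfl fun i hi => by rw [Multiset.count_cons_of_ne (ne_of_mem_erase hi)]
  rw [hs, ← mul_prod_erase _ _ hj, ← mul_prod_erase _ _ hj, hne, Multiset.count_cons_self,
    Nat.factorial_succ, mul_assoc]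

lemma mul_count_mul_partitionWeight (w : ℂ) {j : ℕ} {s : Multiset ℕ} (hj : j ∈ s) (h0 : j ≠ 0) :
    (j : ℂ) * s.count j * partitionWeight w s = w * partitionWeight w (s.erase j) := by
  obtain ⟨t, rfl⟩ := Multiset.exists_cons_of_mem hj
  have hj0 : (j : ℂ) ≠ 0 := Nat.cast_ne_zero.2 h0
  have hc0 : ((t.count j : ℂ) + 1) ≠ 0 := Nat.cast_add_one_ne_zero _
  rw [Multiset.erase_cons_head, partitionWeight, partitionWeight, prod_factorial_count_cons,
    Multiset.card_cons, Multiset.prod_cons, Multiset.count_cons_self]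
  push_cast
  rw [mul_mul_mul_comm, pow_succ', mul_div_assoc', mul_div_assoc', mul_div_mul_left]
  exact mul_ne_zero hj0 hc0

lemma sum_restricted_erase {M : Type*} [AddCommMonoid M] (P : ℕ → Prop) [DecidablePred P]
    {n j : ℕ} (h1 : 1 ≤ j) (hjn : j ≤ n) (hP : P j) (f : Multiset ℕ → M) :
    ∑ p ∈ Nat.Partition.restricted n P with j ∈ p.parts, f (p.parts.erase j) =
      ∑ q ∈ Nat.Partition.restricted (n - j) P, f q.parts := by
  let e := Nat.Partition.partitionWithPartEquiv h1 hjn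
  refine sum_bij' (fun p hp => e ⟨p, (mem_filter.1 hp).2⟩) (fun q _ => (e.symm q).1)
    (fun p hp => ?_) (fun q hq => ?_) (fun p hp => ?_) (fun q hq => ?_) (fun p hp => ?_)
  · simp only [Nat.Partition.restricted, mem_filter, mem_univ, true_and, e,
      Nat.Partition.partitionWithPartEquiv_apply_parts] at hp ⊢
    exact fun i hi => hp.1 i (Multiset.mem_of_mem_erase hi)
  · simp only [Nat.Partition.restricted, mem_filter, mem_univ, true_and, e,
      Nat.Partition.partitionWithPartEquiv_symm_apply_parts, Multiset.mem_cons] at hq ⊢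
    exact ⟨by rintro i (rfl | hi); exacts [hP, hq i hi], Or.inl trivial⟩
  · simp
  · simp
  · simp [e]

lemma mul_partitionWeight_eq_sum (w : ℂ) {n : ℕ} (p : n.Partition) :
    (n : ℂ) * partitionWeight w p.parts =
      ∑ j ∈ p.parts.toFinset, w * partitionWeight w (p.parts.erase j) := by
  have hn : (n : ℂ) = ∑ j ∈ p.parts.toFinset, (j : ℂ) * p.parts.count j := by
    conv_lhs => rw [← p.parts_sum, sum_multiset_count]
    simp [mul_comm]
  rw [hn, sum_mul]
  refine sum_congr rfl fun j hj => ?_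
  rw [Multiset.mem_toFinset] at hj
  exact mul_count_mul_partitionWeight w hj (p.parts_pos hj).ne'

lemma cycleCoeff_zero (w : ℂ) (a : ℕ) : cycleCoeff w a 0 = 1 := by
  simp [cycleCoeff, Nat.Partition.restricted, partitionWeight]

lemma succ_mul_cycleCoeff_succ (w : ℂ) (a n : ℕ) :
    ((n + 1 : ℕ) : ℂ) * cycleCoeff w a (n + 1) =
      w * ∑ i ∈ range (n + 1) with i < a, cycleCoeff w a (n - i) := by
  set R := Nat.Partition.restricted (n + 1) (· ≤ a)
  have hparts : ∀ p ∈ R, ∑ j ∈ p.parts.toFinset, w * partitionWeight w (p.parts.erase j) =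
      ∑ i ∈ range (n + 1) with i < a,
        if i + 1 ∈ p.parts then w * partitionWeight w (p.parts.erase (i + 1)) else 0 := by
    intro p hp
    rw [← sum_filter, filter_filter]
    simp only [R, Nat.Partition.restricted, mem_filter, mem_univ, true_and] at hp
    have hj : ∀ j ∈ p.parts, 0 < j ∧ j ≤ a ∧ j ≤ n + 1 := fun j hj =>
      ⟨p.parts_pos hj, hp j hj, p.le_of_mem_parts hj⟩
    refine sum_nbij' (· - 1) (· + 1) ?_ ?_ ?_ ?_ ?_ <;> grind
  rw [cycleCoeff, mul_sum, sum_congr rfl fun p _ => mul_partitionWeight_eq_sum w p,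
    sum_congr rfl hparts, sum_comm, mul_sum]
  refine sum_congr rfl fun i hi => ?_
  obtain ⟨hin, hia⟩ := mem_filter.1 hi
  rw [mem_range] at hin
  rw [← sum_filter, ← mul_sum, sum_restricted_erase (· ≤ a) (by lia) (by lia) (by lia),
    Nat.add_sub_add_right, cycleCoeff]

lemma prod_factorial_count_add_replicate {j : ℕ} {s : Multiset ℕ} (hj : j ∉ s) (k : ℕ) :
    ∏ i ∈ (s + Multiset.replicate k j).toFinset, ((s + Multiset.replicate k j).count i)! =
      k ! * ∏ i ∈ s.toFinset, (s.count i)! := by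
  induction k with
  | zero => simp
  | succ k ih =>
    rw [Multiset.replicate_succ, Multiset.add_cons, prod_factorial_count_cons, ih,
      Multiset.count_add, Multiset.count_eq_zero.2 hj, Multiset.count_replicate_self, zero_add,
      Nat.factorial_succ, mul_assoc]

lemma parts_eq_filter_add_replicate {n : ℕ} (p : n.Partition) :
    p.parts = p.parts.filter (2 ≤ ·) +
      Multiset.replicate (n - (p.parts.filter (2 ≤ ·)).sum) 1 := by
  have hone : p.parts.filter (¬ 2 ≤ ·) = Multiset.replicate (p.parts.count 1) 1 := by
    rw [← Multiset.filter_eq']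
    refine Multiset.filter_congr fun i hi => ?_
    have := p.parts_pos hi
    lia
  have hsplit := Multiset.filter_add_not (2 ≤ ·) p.parts
  rw [hone] at hsplit
  have hsum := congrArg Multiset.sum hsplit
  rw [Multiset.sum_add, Multiset.sum_replicate, p.parts_sum, smul_eq_mul, mul_one] at hsum
  rw [show n - (p.parts.filter (2 ≤ ·)).sum = p.parts.count 1 by lia, hsplit]

lemma partition_eq_iff_cycleType_eq {β : Type*} [Fintype β] [DecidableEq β]
    (σ : Equiv.Perm β) (p : (Fintype.card β).Partition) :
    σ.partition = p ↔ σ.cycleType = p.parts.filter (2 ≤ ·) := by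
  refine ⟨?_, fun h => ?_⟩
  · rintro rfl
    exact Equiv.Perm.filter_parts_partition_eq_cycleType.symm
  · rw [Nat.Partition.ext_iff, parts_eq_filter_add_replicate p, Equiv.Perm.parts_partition,
      ← Equiv.Perm.sum_cycleType, h]

lemma card_perm_partition_eq_mul {β : Type*} [Fintype β] [DecidableEq β]
    (p : (Fintype.card β).Partition) :
    #{σ : Equiv.Perm β | σ.partition = p} *
      (p.parts.prod * ∏ i ∈ p.parts.toFinset, (p.parts.count i)!) = (Fintype.card β)! := by
  set m := p.parts.filter (2 ≤ ·) with hm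
  have hle : m.sum ≤ Fintype.card β := by
    conv_rhs => rw [← p.parts_sum, ← Multiset.sum_filter_add_sum_filter_not (2 ≤ ·)]
    exact Nat.le_add_right _ _
  have htwo : ∀ i ∈ m, 2 ≤ i := fun i hi => (Multiset.mem_filter.1 hi).2
  have hcard := Equiv.Perm.card_of_cycleType_mul_eq β m
  rw [if_pos ⟨hle, htwo⟩] at hcard
  simp only [partition_eq_iff_cycleType_eq]
  rw [← hm, parts_eq_filter_add_replicate p, ← hm,
    prod_factorial_count_add_replicate fun h => by simpa using htwo 1 h, Multiset.prod_add,
    Multiset.prod_replicate, one_pow, mul_one, ← hcard]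
  ring

lemma sum_pow_card_partition {β : Type*} [Fintype β] [DecidableEq β] (w : ℂ) (a : ℕ) :
    ∑ σ : Equiv.Perm β with ∀ i ∈ σ.partition.parts, i ≤ a, w ^ σ.partition.parts.card =
      (Fintype.card β)! * cycleCoeff w a (Fintype.card β) := by
  have hfib : ∀ p ∈ Nat.Partition.restricted (Fintype.card β) (· ≤ a),
      ({σ : Equiv.Perm β | ∀ i ∈ σ.partition.parts, i ≤ a} : Finset _).filter (·.partition = p) =
        ({σ | σ.partition = p} : Finset _) := by
    intro p hp
    rw [filter_filter]
    refine filter_congr fun σ _ => and_iff_right_of_imp ?_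
    rintro rfl
    simpa [Nat.Partition.restricted] using hp
  rw [← sum_fiberwise_of_maps_to (g := Equiv.Perm.partition)
    (t := Nat.Partition.restricted (Fintype.card β) (· ≤ a)) (by simp [Nat.Partition.restricted]),
    cycleCoeff, mul_sum]
  refine sum_congr rfl fun p hp => ?_
  have hconst : ∀ σ ∈ ({σ : Equiv.Perm β | σ.partition = p} : Finset _),
      w ^ σ.partition.parts.card = w ^ p.parts.card := by simp +contextual
  have hpos : (p.parts.prod * ∏ i ∈ p.parts.toFinset, (p.parts.count i)! : ℕ) ≠ 0 := by
    refine mul_ne_zero ?_ (prod_ne_zero_iff.2 fun i _ => Nat.factorial_ne_zero _)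
    exact Multiset.prod_ne_zero fun h => (p.parts_pos h).ne rfl
  rw [hfib p hp, sum_congr rfl hconst, sum_const, nsmul_eq_mul, partitionWeight,
    mul_div_assoc', eq_div_iff (Nat.cast_ne_zero.2 hpos), ← card_perm_partition_eq_mul p]
  push_cast
  ring

lemma card_parts_partition_eq_numCycles {n : ℕ} (σ : Equiv.Perm (Fin n)) :
    σ.partition.parts.card = numCycles σ := by
  have hfix : ({i | σ i = i} : Finset (Fin n)) = σ.supportᶜ := by ext i; simp
  rw [Equiv.Perm.parts_partition, Multiset.card_add, Multiset.card_replicate, numCycles, hfix,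
    card_compl]

lemma mem_Snalpha_iff_parts_le {n a : ℕ} (ha : 1 ≤ a) (σ : Equiv.Perm (Fin n)) :
    σ ∈ Snalpha n a ↔ ∀ i ∈ σ.partition.parts, i ≤ a := by
  simp only [Snalpha, mem_filter, mem_univ, true_and, Equiv.Perm.parts_partition,
    Multiset.mem_add]
  refine ⟨?_, fun h i hi => h i (Or.inl hi)⟩
  rintro h i (hi | hi)
  · exact h i hi
  · exact (Multiset.eq_of_mem_replicate hi).trans_le ha

lemma sum_Snalpha_pow_numCycles {a : ℕ} (ha : 1 ≤ a) (n : ℕ) (w : ℂ) :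
    ∑ σ ∈ Snalpha n a, w ^ numCycles σ = n ! * cycleCoeff w a n := by
  calc ∑ σ ∈ Snalpha n a, w ^ numCycles σ
      = ∑ σ : Equiv.Perm (Fin n) with ∀ i ∈ σ.partition.parts, i ≤ a,
          w ^ σ.partition.parts.card :=
        sum_congr (by ext σ; simp [mem_Snalpha_iff_parts_le ha]) fun σ _ => by
          rw [card_parts_partition_eq_numCycles]
    _ = (Fintype.card (Fin n))! * cycleCoeff w a (Fintype.card (Fin n)) :=
        sum_pow_card_partition w a
    _ = n ! * cycleCoeff w a n := by rw [Fintype.card_fin]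

end CyclePolynomial

section GeneratingFunction

/-- The exponential generating function `exp (w ∑_{j ≤ a} z ^ j / j)` of the cycle polynomials of
permutations without cycles longer than `a`. -/
noncomputable def cycleGenFun (w : ℂ) (a : ℕ) (z : ℂ) : ℂ :=
  Complex.exp (w * ∑ j ∈ Icc 1 a, z ^ j / j)

lemma hasDerivAt_cycleGenFun (w : ℂ) (a : ℕ) (z : ℂ) :
    HasDerivAt (cycleGenFun w a) (w * ((∑ i ∈ range a, z ^ i) * cycleGenFun w a z)) z := by
  have hsum : HasDerivAt (fun z : ℂ => ∑ j ∈ Icc 1 a, z ^ j / j) (∑ i ∈ range a, z ^ i) z := by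
    rw [range_eq_Ico, ← sum_Ico_add_right_sub_eq (c := 1), zero_add, Ico_add_one_right_eq_Icc]
    refine HasDerivAt.fun_sum fun j hj => ?_
    have hj0 : (j : ℂ) ≠ 0 := Nat.cast_ne_zero.2 (by grind)
    simpa [mul_div_cancel_left₀ _ hj0] using (hasDerivAt_pow j z).div_const (j : ℂ)
  exact (hsum.const_mul w).cexp.congr_deriv (by simp only [cycleGenFun]; ring)

lemma differentiable_cycleGenFun (w : ℂ) (a : ℕ) : Differentiable ℂ (cycleGenFun w a) :=
  fun z => (hasDerivAt_cycleGenFun w a z).differentiableAt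

lemma iteratedDeriv_geom_sum_zero (a i : ℕ) :
    iteratedDeriv i (fun z : ℂ => ∑ k ∈ range a, z ^ k) 0 = if i < a then (i ! : ℂ) else 0 := by
  rw [iteratedDeriv_fun_sum fun k _ => (contDiff_id.pow k).contDiffAt]
  simp only [iteratedDeriv_fun_pow_zero, Nat.cast_ite, Nat.cast_zero, sum_ite_eq, mem_range]

lemma iteratedDeriv_succ_cycleGenFun (w : ℂ) (a n : ℕ) :
    iteratedDeriv (n + 1) (cycleGenFun w a) 0 / n ! =
      w * ∑ i ∈ range (n + 1) with i < a,
        iteratedDeriv (n - i) (cycleGenFun w a) 0 / (n - i)! := by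
  have hderiv : deriv (cycleGenFun w a) =
      fun z => w * ((∑ k ∈ range a, z ^ k) * cycleGenFun w a z) :=
    funext fun z => (hasDerivAt_cycleGenFun w a z).deriv
  have hgeom : ContDiff ℂ n fun z : ℂ => ∑ k ∈ range a, z ^ k := by fun_prop
  rw [iteratedDeriv_succ', hderiv, iteratedDeriv_const_mul_field, iteratedDeriv_fun_mul
    hgeom.contDiffAt (differentiable_cycleGenFun w a).contDiff.contDiffAt, mul_div_assoc,
    sum_div, sum_filter]
  congr 1
  refine sum_congr rfl fun i hi => ?_
  rw [iteratedDeriv_geom_sum_zero, Nat.cast_choose ℂ (by grind)]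
  split_ifs
  · have hn := Nat.cast_ne_zero (R := ℂ).2 n.factorial_ne_zero
    have hi := Nat.cast_ne_zero (R := ℂ).2 i.factorial_ne_zero
    field_simp
  · simp

lemma cycleCoeff_eq_iteratedDeriv (w : ℂ) (a n : ℕ) :
    cycleCoeff w a n = iteratedDeriv n (cycleGenFun w a) 0 / n ! := by
  induction n using Nat.strong_induction_on with
  | _ n ih =>
    cases n with
    | zero =>
      have hsum : ∑ j ∈ Icc 1 a, (0 : ℂ) ^ j / j = 0 :=
        sum_eq_zero fun j hj => by rw [zero_pow (by grind), zero_div]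
      simp [cycleCoeff_zero, cycleGenFun, hsum]
    | succ n =>
      have hn : ((n + 1 : ℕ) : ℂ) ≠ 0 := Nat.cast_ne_zero.2 n.succ_ne_zero
      refine mul_left_cancel₀ hn ?_
      rw [succ_mul_cycleCoeff_succ, sum_congr rfl fun i _ => ih (n - i) (by lia),
        ← iteratedDeriv_succ_cycleGenFun, Nat.factorial_succ, Nat.cast_mul]
      field_simp

lemma circleIntegral_one_div_pow_succ_smul (f : ℂ → ℂ) (n : ℕ) {r : ℝ} (hr : r ≠ 0) :
    (∮ z in C(0, r), (1 / (z - 0) ^ (n + 1)) • f z) = Complex.I / r ^ n *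
      ∫ θ in (-π)..π, f (r * Complex.exp (θ * Complex.I)) * Complex.exp (-(n * θ * Complex.I)) := by
  set g : ℝ → ℂ := fun θ =>
    f (r * Complex.exp (θ * Complex.I)) * Complex.exp (-(n * θ * Complex.I)) with hg
  have hperiod : Function.Periodic g (2 * π) := by
    intro θ
    have hpoint : Complex.exp ((θ + 2 * π : ℝ) * Complex.I) = Complex.exp (θ * Complex.I) := by
      rw [← Complex.exp_periodic (θ * Complex.I)]
      push_cast
      ring_nf
    have hmode : Complex.exp (-(n * (θ + 2 * π : ℝ) * Complex.I)) =
        Complex.exp (-(n * θ * Complex.I)) :=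
      Complex.exp_eq_exp_iff_exists_int.2 ⟨-n, by push_cast; ring⟩
    simp only [hg, hpoint, hmode]
  have hshift := hperiod.intervalIntegral_add_eq 0 (-π)
  rw [zero_add, show -π + 2 * π = π by ring] at hshift
  have hr0 : (r : ℂ) ≠ 0 := Complex.ofReal_ne_zero.2 hr
  rw [circleIntegral, ← hshift, ← intervalIntegral.integral_const_mul]
  refine intervalIntegral.integral_congr fun θ _ => ?_
  simp only [hg, deriv_circleMap, circleMap_zero, smul_eq_mul, sub_zero, Complex.exp_neg, mul_pow,
    mul_assoc (n : ℂ), Complex.exp_nat_mul]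
  have he := Complex.exp_ne_zero (θ * Complex.I)
  field_simp
  ring

lemma iteratedDeriv_zero_div_factorial_eq_integral {f : ℂ → ℂ} (hf : Differentiable ℂ f) (n : ℕ)
    {r : ℝ} (hr : 0 < r) :
    iteratedDeriv n f 0 / n ! = (2 * π * r ^ n : ℂ)⁻¹ *
      ∫ θ in (-π)..π, f (r * Complex.exp (θ * Complex.I)) * Complex.exp (-(n * θ * Complex.I)) := by
  have hcauchy := hf.differentiableOn.circleIntegral_one_div_sub_center_pow_smul (c := 0) hr n
  rw [circleIntegral_one_div_pow_succ_smul f n hr.ne', smul_eq_mul] at hcauchy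
  set J := ∫ θ in (-π)..π, f (r * Complex.exp (θ * Complex.I)) *
    Complex.exp (-(n * θ * Complex.I))
  have hr0 : (r : ℂ) ≠ 0 := Complex.ofReal_ne_zero.2 hr.ne'
  have hn := Nat.cast_ne_zero (R := ℂ).2 n.factorial_ne_zero
  have hpi : (π : ℂ) ≠ 0 := Complex.ofReal_ne_zero.2 pi_ne_zero
  have hI := Complex.I_ne_zero
  field_simp at hcauchy ⊢
  linear_combination -hcauchy

lemma cycleCoeff_eq_integral (w : ℂ) (a n : ℕ) {r : ℝ} (hr : 0 < r) :
    cycleCoeff w a n = (2 * π * r ^ n : ℂ)⁻¹ *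
      ∫ θ in (-π)..π, cycleGenFun w a (r * Complex.exp (θ * Complex.I)) *
        Complex.exp (-(n * θ * Complex.I)) := by
  rw [cycleCoeff_eq_iteratedDeriv,
    iteratedDeriv_zero_div_factorial_eq_integral (differentiable_cycleGenFun w a) n hr]

end GeneratingFunction

section Moments

/-- The mean of `K = ∑ Z j`, where `Z 1, …, Z a` are independent Poisson variables and `Z j`, the
number of cycles of length `j`, has mean `x ^ j / j`. -/
noncomputable def cycleMean (a : ℕ) (x : ℝ) : ℝ := ∑ j ∈ Icc 1 a, x ^ j / j

/-- The mean of `N = ∑ j * Z j`, the total size, in the Poisson model of `cycleMean`. -/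
noncomputable def sizeMean (a : ℕ) (x : ℝ) : ℝ := ∑ j ∈ Icc 1 a, x ^ j

/-- The variance of the total size `N = ∑ j * Z j`. -/
noncomputable def sizeVar (a : ℕ) (x : ℝ) : ℝ := ∑ j ∈ Icc 1 a, j * x ^ j

/-- The coefficient of the linear regression of `K` on `N`; the covariance of `K` and `N` is
`sizeMean a x`. -/
noncomputable def regressionSlope (a : ℕ) (x : ℝ) : ℝ := sizeMean a x / sizeVar a x

/-- The residual variance of `K` after linear regression on `N`. -/
noncomputable def cycleVar (a : ℕ) (x : ℝ) : ℝ := cycleMean a x - sizeMean a x ^ 2 / sizeVar a x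

variable {a : ℕ} {x : ℝ}

lemma sizeMean_pos (ha : 1 ≤ a) (hx : 0 < x) : 0 < sizeMean a x :=
  sum_pos (fun _ _ => by positivity) ⟨1, by simp [ha]⟩

lemma sizeVar_pos (ha : 1 ≤ a) (hx : 0 < x) : 0 < sizeVar a x := by
  refine sum_pos (fun j hj => ?_) ⟨1, by simp [ha]⟩
  have : (0 : ℝ) < j := Nat.cast_pos.2 (mem_Icc.1 hj).1
  positivity

lemma sizeVar_le (hx : 0 ≤ x) : sizeVar a x ≤ a * sizeMean a x := by
  rw [sizeVar, sizeMean, mul_sum]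
  gcongr with j hj
  exact (mem_Icc.1 hj).2

lemma sum_Icc_one_cast (a : ℕ) : ∑ j ∈ Icc 1 a, (j : ℝ) = a * (a + 1) / 2 := by
  induction a with
  | zero => simp
  | succ k ih =>
    rw [sum_Icc_succ_top (by lia), ih]
    push_cast
    ring

-- Chebyshev's sum inequality: `j` and `x ^ j` increase together.
lemma sizeMean_mul_le_sizeVar (hx : 1 ≤ x) : sizeMean a x * ((a + 1) / 2) ≤ sizeVar a x := by
  rcases Nat.eq_zero_or_pos a with rfl | ha
  · simp [sizeMean, sizeVar]
  have hmono : MonovaryOn (fun j : ℕ => (j : ℝ)) (x ^ ·) (Icc 1 a : Finset ℕ) :=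
    fun i _ j _ hij => Nat.cast_le.2 <| le_of_not_gt fun hji =>
      hij.not_ge (pow_le_pow_right₀ hx hji.le)
  have hcheb := hmono.sum_mul_sum_le_card_mul_sum
  rw [sum_Icc_one_cast, Nat.card_Icc, Nat.add_sub_cancel] at hcheb
  have ha0 : (0 : ℝ) < a := Nat.cast_pos.2 ha
  refine le_of_mul_le_mul_left ?_ ha0
  rw [sizeMean, sizeVar]
  linarith

lemma regressionSlope_nonneg (hx : 0 ≤ x) : 0 ≤ regressionSlope a x :=
  div_nonneg (sum_nonneg fun _ _ => by positivity) (sum_nonneg fun _ _ => by positivity)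

lemma regressionSlope_le (hx : 1 ≤ x) : regressionSlope a x ≤ 2 / (a + 1) := by
  rcases Nat.eq_zero_or_pos a with rfl | ha
  · simp [regressionSlope, sizeMean]
  rw [regressionSlope, div_le_div_iff₀ (sizeVar_pos ha (by linarith)) (by positivity)]
  linarith [sizeMean_mul_le_sizeVar (a := a) hx]

lemma sum_mul_sq_eq_cycleVar_add_sizeVar (ha : 1 ≤ a) (hx : 0 < x) (t τ : ℝ) :
    ∑ j ∈ Icc 1 a, x ^ j / j * (t + j * (τ - t * regressionSlope a x)) ^ 2 =
      t ^ 2 * cycleVar a x + τ ^ 2 * sizeVar a x := by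
  have hvar := (sizeVar_pos ha hx).ne'
  set θ := τ - t * regressionSlope a x with hθ
  have hterm : ∀ j ∈ Icc 1 a, x ^ j / j * (t + j * θ) ^ 2 =
      t ^ 2 * (x ^ j / j) + 2 * t * θ * x ^ j + θ ^ 2 * (j * x ^ j) := by
    intro j hj
    have hj0 : (j : ℝ) ≠ 0 := Nat.cast_ne_zero.2 (by grind)
    field_simp
    ring
  rw [sum_congr rfl hterm, sum_add_distrib, sum_add_distrib, ← mul_sum, ← mul_sum, ← mul_sum,
    ← cycleMean, ← sizeMean, ← sizeVar, hθ, cycleVar, regressionSlope]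
  field_simp
  ring

lemma cycleVar_eq_sum (ha : 1 ≤ a) (hx : 0 < x) :
    cycleVar a x = ∑ j ∈ Icc 1 a, x ^ j / j * (1 - j * regressionSlope a x) ^ 2 := by
  have h := sum_mul_sq_eq_cycleVar_add_sizeVar ha hx 1 0
  simpa [sub_eq_add_neg] using h.symm

lemma cycleVar_nonneg (ha : 1 ≤ a) (hx : 0 < x) : 0 ≤ cycleVar a x := by
  rw [cycleVar_eq_sum ha hx]
  exact sum_nonneg fun _ _ => by positivity

end Moments

section CenteredCharFun

/-- The joint characteristic function at `(t, θ)` of the centred pair `(K - 𝔼 K, N - 𝔼 N)` of the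
Poisson model of `cycleMean`. -/
noncomputable def centeredCharFun (a : ℕ) (x t θ : ℝ) : ℂ :=
  Complex.exp (∑ j ∈ Icc 1 a, ((x ^ j / j : ℝ) : ℂ) *
    (Complex.exp ((t + j * θ : ℝ) * Complex.I) - 1 - (t + j * θ : ℝ) * Complex.I))

/-- The integral of the centred characteristic function over a period in the variable `θ` dual to
the size `N`: up to a factor, the Fourier transform of `K - 𝔼 K` on the event `N = 𝔼 N`. -/
noncomputable def charIntegral (a : ℕ) (x t : ℝ) : ℂ :=
  ∫ θ in (-π)..π, centeredCharFun a x t θ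

lemma continuous_centeredCharFun (a : ℕ) (x t : ℝ) : Continuous (centeredCharFun a x t) := by
  unfold centeredCharFun
  fun_prop

lemma norm_centeredCharFun (a : ℕ) (x t θ : ℝ) :
    ‖centeredCharFun a x t θ‖ = exp (-∑ j ∈ Icc 1 a, x ^ j / j * (1 - cos (t + j * θ))) := by
  rw [centeredCharFun, Complex.norm_exp, Complex.re_sum, ← sum_neg_distrib]
  congr 1
  refine sum_congr rfl fun j _ => ?_
  rw [Complex.re_ofReal_mul, Complex.sub_re, Complex.sub_re, Complex.exp_ofReal_mul_I_re,
    Complex.re_ofReal_mul, Complex.I_re, Complex.one_re]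
  ring

variable {a : ℕ} {x : ℝ}

lemma cycleGenFun_eq_centeredCharFun {n : ℕ} (hn : sizeMean a x = n) (t θ : ℝ) :
    cycleGenFun (Complex.exp (t * Complex.I)) a (x * Complex.exp (θ * Complex.I)) *
        Complex.exp (-(n * θ * Complex.I)) =
      Complex.exp (cycleMean a x + cycleMean a x * t * Complex.I) * centeredCharFun a x t θ := by
  have hterm : ∀ j ∈ Icc 1 a, ((x ^ j / j : ℝ) : ℂ) *
      (Complex.exp ((t + j * θ : ℝ) * Complex.I) - 1 - (t + j * θ : ℝ) * Complex.I) =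
      Complex.exp (t * Complex.I) * ((x * Complex.exp (θ * Complex.I)) ^ j / j)
        - (x ^ j / j : ℝ) * (1 + t * Complex.I) - (x ^ j : ℝ) * (θ * Complex.I) := by
    intro j hj
    have hj0 : (j : ℂ) ≠ 0 := Nat.cast_ne_zero.2 (by grind)
    have hexp : Complex.exp ((t + j * θ : ℝ) * Complex.I) =
        Complex.exp (t * Complex.I) * Complex.exp (θ * Complex.I) ^ j := by
      rw [← Complex.exp_nat_mul, ← Complex.exp_add]
      push_cast
      ring_nf
    rw [hexp]
    push_cast
    field_simp
    ring
  rw [cycleGenFun, centeredCharFun, ← Complex.exp_add, ← Complex.exp_add, sum_congr rfl hterm,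
    sum_sub_distrib, sum_sub_distrib, ← mul_sum, ← sum_mul, ← sum_mul, ← Complex.ofReal_sum,
    ← Complex.ofReal_sum, ← cycleMean, ← sizeMean, hn]
  congr 1
  push_cast
  ring

lemma sum_Snalpha_cexp_numCycles {n : ℕ} (ha : 1 ≤ a) (hx : 0 < x) (hn : sizeMean a x = n)
    (t : ℝ) :
    ∑ σ ∈ Snalpha n a, Complex.exp ((t * (numCycles σ - cycleMean a x) : ℝ) * Complex.I) =
      n ! * Complex.exp (cycleMean a x) / (2 * π * x ^ n) * charIntegral a x t := by
  have hterm : ∀ σ ∈ Snalpha n a,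
      Complex.exp ((t * (numCycles σ - cycleMean a x) : ℝ) * Complex.I) =
        Complex.exp (-(cycleMean a x * t * Complex.I)) *
          Complex.exp (t * Complex.I) ^ numCycles σ := by
    intro σ _
    rw [← Complex.exp_nat_mul, ← Complex.exp_add]
    push_cast
    ring_nf
  rw [sum_congr rfl hterm, ← mul_sum, sum_Snalpha_pow_numCycles ha,
    cycleCoeff_eq_integral _ _ _ hx]
  simp_rw [cycleGenFun_eq_centeredCharFun hn]
  rw [intervalIntegral.integral_const_mul, ← charIntegral, Complex.exp_add, Complex.exp_neg]
  have hexp := Complex.exp_ne_zero (cycleMean a x * t * Complex.I)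
  field_simp

lemma abs_add_mul_sub_regressionSlope_le (hx : 1 ≤ x) (t τ : ℝ) {j : ℕ} (hj : j ∈ Icc 1 a) :
    |t + j * (τ - t * regressionSlope a x)| ≤ |t| + a * |τ| := by
  have hja : (j : ℝ) ≤ a := Nat.cast_le.2 (mem_Icc.1 hj).2
  have hslope : (j : ℝ) * regressionSlope a x ≤ 2 := by
    calc (j : ℝ) * regressionSlope a x ≤ a * (2 / (a + 1)) := by
          gcongr
          exacts [regressionSlope_nonneg (by linarith), regressionSlope_le hx]
      _ ≤ 2 := by
        rw [mul_div_assoc', div_le_iff₀ (by positivity)]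
        linarith
  have hslope0 := mul_nonneg j.cast_nonneg (regressionSlope_nonneg (a := a) (zero_le_one.trans hx))
  have hres : |1 - j * regressionSlope a x| ≤ 1 := by
    rw [abs_le]
    constructor <;> linarith
  calc |t + j * (τ - t * regressionSlope a x)|
      = |t * (1 - j * regressionSlope a x) + j * τ| := by ring_nf
    _ ≤ |t * (1 - j * regressionSlope a x)| + |j * τ| := abs_add_le _ _
    _ = |t| * |1 - j * regressionSlope a x| + j * |τ| := by rw [abs_mul, abs_mul, Nat.abs_cast]
    _ ≤ |t| * 1 + a * |τ| := by gcongr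
    _ = |t| + a * |τ| := by rw [mul_one]

lemma norm_centeredCharFun_le_gaussian (ha : 1 ≤ a) (hx : 1 ≤ x) {t τ : ℝ}
    (h : |t| + a * |τ| ≤ π) :
    ‖centeredCharFun a x t (τ - t * regressionSlope a x)‖ ≤
      exp (-(2 / π ^ 2 * (t ^ 2 * cycleVar a x + τ ^ 2 * sizeVar a x))) := by
  rw [norm_centeredCharFun, ← sum_mul_sq_eq_cycleVar_add_sizeVar ha (by linarith), mul_sum]
  refine exp_le_exp.2 (neg_le_neg (sum_le_sum fun j hj => ?_))
  have hcos := cos_le_one_sub_mul_cos_sq ((abs_add_mul_sub_regressionSlope_le hx t τ hj).trans h)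
  rw [mul_left_comm]
  exact mul_le_mul_of_nonneg_left (by linarith) (by positivity)

lemma norm_cexp_mul_I_sub_taylor_two_le (y : ℝ) :
    ‖Complex.exp (y * Complex.I) - 1 - y * Complex.I + (y : ℂ) ^ 2 / 2‖ ≤ |y| ^ 3 * exp |y| := by
  have h := Complex.norm_exp_sub_sum_le_norm_mul_exp (y * Complex.I) 3
  have hsum : ∑ m ∈ range 3, ((y : ℂ) * Complex.I) ^ m / (m ! : ℂ) =
      1 + y * Complex.I - (y : ℂ) ^ 2 / 2 := by
    simp only [sum_range_succ, range_zero, sum_empty, Nat.factorial, mul_pow, Complex.I_sq]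
    push_cast
    ring
  rw [hsum, norm_mul, Complex.norm_I, mul_one, Complex.norm_real, Real.norm_eq_abs] at h
  convert h using 2
  ring

lemma centeredCharFun_eq_cexp_add (ha : 1 ≤ a) (hx : 1 ≤ x) {t τ : ℝ} (h : |t| + a * |τ| ≤ 1) :
    ∃ ε : ℂ, ‖ε‖ ≤
        (|t| + a * |τ|) * (t ^ 2 * cycleVar a x + τ ^ 2 * sizeVar a x) * exp 1 ∧
      centeredCharFun a x t (τ - t * regressionSlope a x) =
        Complex.exp ((-(t ^ 2 * cycleVar a x + τ ^ 2 * sizeVar a x) / 2 : ℝ) + ε) := by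
  rw [← sum_mul_sq_eq_cycleVar_add_sizeVar ha (by linarith)]
  set y : ℕ → ℝ := fun j => t + j * (τ - t * regressionSlope a x) with hy
  refine ⟨∑ j ∈ Icc 1 a, ((x ^ j / j : ℝ) : ℂ) *
    (Complex.exp (y j * Complex.I) - 1 - y j * Complex.I + (y j : ℂ) ^ 2 / 2), ?_, ?_⟩
  · rw [mul_sum, sum_mul]
    refine norm_sum_le_of_le _ fun j hj => ?_
    have hyj : |y j| ≤ |t| + a * |τ| := abs_add_mul_sub_regressionSlope_le hx t τ hj
    have hw : 0 ≤ x ^ j / j := by positivity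
    rw [norm_mul, Complex.norm_real, norm_of_nonneg hw]
    calc x ^ j / j * _ ≤ x ^ j / j * (|y j| ^ 3 * exp |y j|) := by
          gcongr
          exact norm_cexp_mul_I_sub_taylor_two_le _
      _ ≤ x ^ j / j * ((|t| + a * |τ|) * |y j| ^ 2 * exp 1) := by
          rw [pow_succ' |y j| 2]
          gcongr
          exact hyj.trans h
      _ = (|t| + a * |τ|) * (x ^ j / j * y j ^ 2) * exp 1 := by rw [sq_abs]; ring
  · rw [centeredCharFun, ← sum_neg_distrib, sum_div, Complex.ofReal_sum, ← sum_add_distrib]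
    congr 1
    refine sum_congr rfl fun j _ => ?_
    simp only [hy]
    push_cast
    ring

end CenteredCharFun

section OuterRegion

/-- The average of `x ^ 1, …, x ^ a`. When `x` is the saddle point for permutations of `n` points
with cycles of length at most `a`, it equals `n / a`. -/
noncomputable def powMean (a : ℕ) (x : ℝ) : ℝ := sizeMean a x / a

variable {a : ℕ} {x : ℝ}

lemma rpow_le_powMean (ha : 1 ≤ a) (hx : 0 < x) : x ^ ((a + 1) / 2 : ℝ) ≤ powMean a x := by
  have ha0 : (a : ℝ) ≠ 0 := Nat.cast_ne_zero.2 (by lia)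
  have hamgm := geom_mean_le_arith_mean_weighted (Icc 1 a) (fun _ => (a : ℝ)⁻¹) (x ^ ·)
    (fun _ _ => by positivity) (by simp [ha0]) (fun _ _ => by positivity)
  have hexp : ∑ j ∈ Icc 1 a, j * (a : ℝ)⁻¹ = (a + 1) / 2 := by
    rw [← sum_mul, sum_Icc_one_cast]
    field_simp
  calc x ^ ((a + 1) / 2 : ℝ) = ∏ j ∈ Icc 1 a, (x ^ j) ^ (a : ℝ)⁻¹ := by
        rw [← hexp, rpow_sum_of_pos hx]
        exact prod_congr rfl fun j _ => rpow_natCast_mul hx.le j _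
    _ ≤ ∑ j ∈ Icc 1 a, (a : ℝ)⁻¹ * x ^ j := hamgm
    _ = powMean a x := by rw [← mul_sum, ← sizeMean, powMean, inv_mul_eq_div]

lemma powMean_pos (ha : 1 ≤ a) (hx : 0 < x) : 0 < powMean a x :=
  (rpow_pos_of_pos hx _).trans_le (rpow_le_powMean ha hx)

-- Bernoulli's inequality for the exponent `(a + 4) / 6`, which is at least `1`.
lemma sq_mul_sub_one_le (ha : 2 ≤ a) (hx : 1 ≤ x) :
    (a * (x - 1)) ^ 2 ≤ 36 * x * (powMean a x ^ (1 / 3 : ℝ)) ^ 2 := by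
  have hx0 : 0 < x := by linarith
  have ha2 : (2 : ℝ) ≤ a := Nat.ofNat_le_cast.2 ha
  have hbern : a * (x - 1) / 6 ≤ x ^ ((a + 4) / 6 : ℝ) := by
    have h := one_add_mul_self_le_rpow_one_add (s := x - 1) (by linarith)
      (p := (a + 4) / 6) (by linarith)
    rw [add_sub_cancel] at h
    linarith
  have hroot : x ^ ((a + 1) / 6 : ℝ) ≤ powMean a x ^ (1 / 3 : ℝ) := by
    calc x ^ ((a + 1) / 6 : ℝ) = (x ^ ((a + 1) / 2 : ℝ)) ^ (1 / 3 : ℝ) := by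
          rw [← rpow_mul hx0.le]
          ring_nf
      _ ≤ powMean a x ^ (1 / 3 : ℝ) := by
          gcongr
          exact rpow_le_powMean (by lia) hx0
  have hsq : (x ^ ((a + 4) / 6 : ℝ)) ^ 2 = x * (x ^ ((a + 1) / 6 : ℝ)) ^ 2 := by
    rw [← rpow_mul_natCast hx0.le, ← rpow_mul_natCast hx0.le,
      ← rpow_one_add' hx0.le (by positivity)]
    push_cast
    ring_nf
  calc (a * (x - 1)) ^ 2 = 36 * (a * (x - 1) / 6) ^ 2 := by ring
    _ ≤ 36 * (x ^ ((a + 4) / 6 : ℝ)) ^ 2 := by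
        have : 0 ≤ x - 1 := by linarith
        gcongr
    _ = 36 * x * (x ^ ((a + 1) / 6 : ℝ)) ^ 2 := by rw [hsq, mul_assoc]
    _ ≤ 36 * x * (powMean a x ^ (1 / 3 : ℝ)) ^ 2 := by gcongr

lemma sq_norm_ofReal_mul_cexp_sub_one_ge (hx : 0 ≤ x) {θ : ℝ} (hθ : |θ| ≤ π) :
    (x - 1) ^ 2 + 2 / 5 * x * θ ^ 2 ≤ ‖x * Complex.exp (θ * Complex.I) - 1‖ ^ 2 := by
  have hnorm : ‖x * Complex.exp (θ * Complex.I) - 1‖ ^ 2 = (x - 1) ^ 2 + 2 * x * (1 - cos θ) := by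
    rw [Complex.sq_norm, Complex.normSq_apply, Complex.sub_re, Complex.sub_im,
      Complex.re_ofReal_mul, Complex.im_ofReal_mul, Complex.exp_ofReal_mul_I_re,
      Complex.exp_ofReal_mul_I_im, Complex.one_re, Complex.one_im]
    linear_combination x ^ 2 * sin_sq_add_cos_sq θ
  have hpi : π ^ 2 ≤ 10 := by nlinarith [pi_pos, pi_lt_d2]
  have hcos : 1 / 5 * θ ^ 2 ≤ 1 - cos θ := by
    have h := cos_le_one_sub_mul_cos_sq hθ
    have : 1 / 5 * θ ^ 2 ≤ 2 / π ^ 2 * θ ^ 2 := by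
      gcongr ?_ * _
      rw [div_le_div_iff₀ (by norm_num) (by positivity)]
      linarith
    linarith
  rw [hnorm]
  nlinarith

lemma sub_one_mul_sum_Icc_one_pow {R : Type*} [CommRing R] (z : R) (a : ℕ) :
    (z - 1) * ∑ j ∈ Icc 1 a, z ^ j = z ^ (a + 1) - z := by
  rw [← Ico_add_one_right_eq_Icc, mul_comm, geom_sum_Ico_mul z (by lia), pow_one]

lemma norm_sub_one_mul_norm_sum_pow_le {z : ℂ} (hz : ‖z‖ = x) :
    ‖z - 1‖ * ‖∑ j ∈ Icc 1 a, z ^ j‖ ≤ (x - 1) * sizeMean a x + 2 * x := by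
  rw [← norm_mul, sub_one_mul_sum_Icc_one_pow, sizeMean, sub_one_mul_sum_Icc_one_pow]
  calc ‖z ^ (a + 1) - z‖ ≤ ‖z ^ (a + 1)‖ + ‖z‖ := norm_sub_le _ _
    _ = x ^ (a + 1) - x + 2 * x := by rw [norm_pow, hz]; ring

lemma le_one_sub_mul_of_one_add_mul_sq_le {L D κ : ℝ} (hD : 0 ≤ D) (hκ0 : 0 ≤ κ) (hκ1 : κ ≤ 1)
    (h : (1 + κ) * L ^ 2 ≤ D ^ 2) : L ≤ (1 - κ / 4) * D := by
  have hκ : 1 ≤ (1 - κ / 4) ^ 2 * (1 + κ) := by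
    nlinarith [mul_nonneg hκ0 (sub_nonneg.2 hκ1), pow_nonneg hκ0 3]
  have hsq : L ^ 2 ≤ ((1 - κ / 4) * D) ^ 2 := by
    calc L ^ 2 ≤ (1 - κ / 4) ^ 2 * (1 + κ) * L ^ 2 := le_mul_of_one_le_left (sq_nonneg L) hκ
      _ = (1 - κ / 4) ^ 2 * ((1 + κ) * L ^ 2) := mul_assoc _ _ _
      _ ≤ (1 - κ / 4) ^ 2 * D ^ 2 := by gcongr
      _ = ((1 - κ / 4) * D) ^ 2 := (mul_pow _ _ _).symm
  exact le_of_abs_le (abs_le_of_sq_le_sq hsq (mul_nonneg (by linarith) hD))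

lemma powMean_sub_norm_div_le_sum (hx : 0 ≤ x) (t θ : ℝ) :
    powMean a x - ‖∑ j ∈ Icc 1 a, (x * Complex.exp (θ * Complex.I)) ^ j‖ / a ≤
      ∑ j ∈ Icc 1 a, x ^ j / j * (1 - cos (t + j * θ)) := by
  set z : ℂ := x * Complex.exp (θ * Complex.I) with hz
  have hre : ∀ j ∈ Icc 1 a, x ^ j * cos (t + j * θ) =
      (Complex.exp (t * Complex.I) * z ^ j).re := by
    intro j _
    have : Complex.exp (t * Complex.I) * z ^ j =
        (x ^ j : ℝ) * Complex.exp ((t + j * θ : ℝ) * Complex.I) := by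
      rw [hz, mul_pow, ← Complex.exp_nat_mul, mul_left_comm, ← Complex.exp_add]
      push_cast
      ring_nf
    rw [this, Complex.re_ofReal_mul, Complex.exp_ofReal_mul_I_re]
  have hnorm : ∑ j ∈ Icc 1 a, x ^ j * cos (t + j * θ) ≤ ‖∑ j ∈ Icc 1 a, z ^ j‖ := by
    calc ∑ j ∈ Icc 1 a, x ^ j * cos (t + j * θ)
        = (Complex.exp (t * Complex.I) * ∑ j ∈ Icc 1 a, z ^ j).re := by
          rw [mul_sum, Complex.re_sum, sum_congr rfl hre]
      _ ≤ ‖Complex.exp (t * Complex.I) * ∑ j ∈ Icc 1 a, z ^ j‖ := Complex.re_le_norm _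
      _ = ‖∑ j ∈ Icc 1 a, z ^ j‖ := by rw [norm_mul, Complex.norm_exp_ofReal_mul_I, one_mul]
  calc powMean a x - ‖∑ j ∈ Icc 1 a, z ^ j‖ / a
      ≤ (∑ j ∈ Icc 1 a, x ^ j * (1 - cos (t + j * θ))) / a := by
        rw [powMean, ← sub_div, sizeMean]
        simp_rw [mul_sub, mul_one, sum_sub_distrib]
        gcongr
    _ ≤ ∑ j ∈ Icc 1 a, x ^ j / j * (1 - cos (t + j * θ)) := by
        rw [sum_div]
        refine sum_le_sum fun j hj => ?_
        obtain ⟨hj1, hja⟩ := mem_Icc.1 hj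
        have hcos : 0 ≤ 1 - cos (t + j * θ) := sub_nonneg.2 (cos_le_one _)
        have : (0 : ℝ) < j := Nat.cast_pos.2 hj1
        rw [mul_div_right_comm]
        gcongr

lemma sq_add_le_sq_mul_norm_sub_one (hx : 0 ≤ x) {θ : ℝ} (hθ : |θ| ≤ π) :
    (a * (x - 1)) ^ 2 + 2 / 5 * x * (a * θ) ^ 2 ≤
      (a * ‖x * Complex.exp (θ * Complex.I) - 1‖) ^ 2 := by
  have := mul_le_mul_of_nonneg_left (sq_norm_ofReal_mul_cexp_sub_one_ge hx hθ) (sq_nonneg (a : ℝ))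
  linarith

lemma half_le_mul_norm_sub_one (ha : 2 ≤ a) (hx : 1 ≤ x) {θ : ℝ} (hθ : |θ| ≤ π)
    (haθ : 2 ≤ a * |θ|) : x / 2 ≤ a * ‖x * Complex.exp (θ * Complex.I) - 1‖ := by
  have ha2 : (2 : ℝ) ≤ a := Nat.ofNat_le_cast.2 ha
  have haθ2 : 2 ^ 2 ≤ (a * θ) ^ 2 := by
    rw [← sq_abs (a * θ), abs_mul, Nat.abs_cast]
    gcongr
  have hsq : (x / 2) ^ 2 ≤ (a * (x - 1)) ^ 2 + 2 / 5 * x * (a * θ) ^ 2 := by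
    calc (x / 2) ^ 2 ≤ (2 * (x - 1)) ^ 2 + 2 / 5 * x * 2 ^ 2 := by nlinarith [sq_nonneg (x - 1)]
      _ ≤ (a * (x - 1)) ^ 2 + 2 / 5 * x * (a * θ) ^ 2 := by
        have : 0 ≤ x - 1 := by linarith
        gcongr
  exact le_of_abs_le (abs_le_of_sq_le_sq
    (hsq.trans (sq_add_le_sq_mul_norm_sub_one (by linarith) hθ)) (by positivity))

lemma mul_sub_one_le_mul_norm_sub_one (ha : 2 ≤ a) (hx : 1 ≤ x) {θ : ℝ} (hθ : |θ| ≤ π) :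
    a * (x - 1) ≤ (1 - min 1 ((a * θ) ^ 2 / (90 * (powMean a x ^ (1 / 3 : ℝ)) ^ 2)) / 4) *
      (a * ‖x * Complex.exp (θ * Complex.I) - 1‖) := by
  have hroot := rpow_pos_of_pos (powMean_pos (show 1 ≤ a by lia) (zero_lt_one.trans_le hx)) (1 / 3)
  set r := powMean a x ^ (1 / 3 : ℝ)
  set κ := min 1 ((a * θ) ^ 2 / (90 * r ^ 2))
  have hκL : κ * (a * (x - 1)) ^ 2 ≤ 2 / 5 * x * (a * θ) ^ 2 := by
    calc κ * (a * (x - 1)) ^ 2 ≤ (a * θ) ^ 2 / (90 * r ^ 2) * (36 * x * r ^ 2) := by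
          gcongr
          exacts [min_le_right _ _, sq_mul_sub_one_le ha hx]
      _ = 2 / 5 * x * (a * θ) ^ 2 := by field_simp; ring
  refine le_one_sub_mul_of_one_add_mul_sq_le (by positivity) (by positivity) (min_le_left _ _) ?_
  linarith [sq_add_le_sq_mul_norm_sub_one (a := a) (zero_le_one.trans hx) hθ]

-- The geometric sum with ratio `z = x * exp (θ * I)` is smaller than its value at `θ = 0` by
-- about the factor `(x - 1) / ‖z - 1‖`.
lemma min_powMean_sub_le_sum (ha : 2 ≤ a) (hx : 1 ≤ x) {θ : ℝ} (hθ : |θ| ≤ π)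
    (haθ : 2 ≤ a * |θ|) (t : ℝ) :
    min (powMean a x / 4) (powMean a x ^ (1 / 3 : ℝ) / 360 * (a * θ) ^ 2) - 4 ≤
      ∑ j ∈ Icc 1 a, x ^ j / j * (1 - cos (t + j * θ)) := by
  have : (0 : ℝ) < a := Nat.cast_pos.2 (by lia)
  have hy0 := powMean_pos (show 1 ≤ a by lia) (zero_lt_one.trans_le hx)
  have hsum := powMean_sub_norm_div_le_sum (a := a) (zero_le_one.trans hx) t θ
  have hratio := mul_sub_one_le_mul_norm_sub_one ha hx hθ
  have hdist := half_le_mul_norm_sub_one ha hx hθ haθ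
  have hz : ‖x * Complex.exp (θ * Complex.I)‖ = x := by
    rw [norm_mul, Complex.norm_exp_ofReal_mul_I, mul_one, Complex.norm_of_nonneg (by linarith)]
  set y := powMean a x with hy
  set z : ℂ := x * Complex.exp (θ * Complex.I)
  set κ := min 1 ((a * θ) ^ 2 / (90 * (y ^ (1 / 3 : ℝ)) ^ 2)) with hκ
  have hnorm : ‖∑ j ∈ Icc 1 a, z ^ j‖ / a ≤ (1 - κ / 4) * y + 4 := by
    refine le_of_mul_le_mul_left ?_ (show 0 < a * ‖z - 1‖ by linarith)
    calc a * ‖z - 1‖ * (‖∑ j ∈ Icc 1 a, z ^ j‖ / a) = ‖z - 1‖ * ‖∑ j ∈ Icc 1 a, z ^ j‖ := by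
          field_simp
      _ ≤ (x - 1) * sizeMean a x + 2 * x := norm_sub_one_mul_norm_sum_pow_le hz
      _ = a * (x - 1) * y + 2 * x := by rw [hy, powMean]; field_simp
      _ ≤ (1 - κ / 4) * (a * ‖z - 1‖) * y + 4 * (a * ‖z - 1‖) :=
        add_le_add (mul_le_mul_of_nonneg_right hratio hy0.le) (by linarith)
      _ = a * ‖z - 1‖ * ((1 - κ / 4) * y + 4) := by ring
  have hmin : κ * y / 4 = min (y / 4) (y ^ (1 / 3 : ℝ) / 360 * (a * θ) ^ 2) := by
    have hcube : y = (y ^ (1 / 3 : ℝ)) ^ 3 := by rw [← rpow_mul_natCast hy0.le]; norm_num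
    rw [mul_div_assoc, hκ, min_mul_of_nonneg _ _ (by positivity), one_mul]
    congr 1
    nth_rewrite 2 [hcube]
    field_simp
    ring
  linarith

lemma norm_centeredCharFun_le_of_two_le (ha : 2 ≤ a) (hx : 1 ≤ x) {θ : ℝ} (hθ : |θ| ≤ π)
    (haθ : 2 ≤ a * |θ|) (t : ℝ) :
    ‖centeredCharFun a x t θ‖ ≤ exp 4 * (exp (-(powMean a x / 4)) +
      exp (-(powMean a x ^ (1 / 3 : ℝ) / 180)) *
        exp (-(powMean a x ^ (1 / 3 : ℝ) / 720 * a ^ 2) * θ ^ 2)) := by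
  set y := powMean a x
  set r := y ^ (1 / 3 : ℝ)
  have hr0 : 0 ≤ r := rpow_nonneg (powMean_pos (by lia) (by linarith)).le _
  have haθ2 : 2 ^ 2 ≤ (a * θ) ^ 2 := by
    rw [← sq_abs (a * θ), abs_mul, Nat.abs_cast]
    gcongr
  have hgauss : r / 180 + r / 720 * a ^ 2 * θ ^ 2 ≤ r / 360 * (a * θ) ^ 2 := by
    linarith [mul_le_mul_of_nonneg_left haθ2 hr0]
  calc ‖centeredCharFun a x t θ‖
      ≤ exp (4 + max (-(y / 4)) (-(r / 360 * (a * θ) ^ 2))) := by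
        rw [norm_centeredCharFun, max_neg_neg]
        gcongr
        linarith [min_powMean_sub_le_sum ha hx hθ haθ t]
    _ = exp 4 * max (exp (-(y / 4))) (exp (-(r / 360 * (a * θ) ^ 2))) := by
        rw [exp_add, exp_monotone.map_max]
    _ ≤ exp 4 * (exp (-(y / 4)) + exp (-(r / 360 * (a * θ) ^ 2))) := by
        gcongr
        exact max_le_add_of_nonneg (exp_nonneg _) (exp_nonneg _)
    _ ≤ exp 4 * (exp (-(y / 4)) + exp (-(r / 180)) * exp (-(r / 720 * a ^ 2) * θ ^ 2)) := by
        rw [← exp_add]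
        gcongr
        linarith

lemma norm_setIntegral_centeredCharFun_le (ha : 2 ≤ a) (hx : 1 ≤ x) {E : Set ℝ}
    (hE : MeasurableSet E) (hEπ : ∀ θ ∈ E, |θ| ≤ π) (hEa : ∀ θ ∈ E, 2 ≤ a * |θ|) (t : ℝ) :
    ‖∫ θ in E, centeredCharFun a x t θ‖ ≤ exp 4 * (2 * π * exp (-(powMean a x / 4)) +
      exp (-(powMean a x ^ (1 / 3 : ℝ) / 180)) *
        √(π / (powMean a x ^ (1 / 3 : ℝ) / 720 * a ^ 2))) := by
  have : (0 : ℝ) < a := Nat.cast_pos.2 (by lia)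
  have hr := rpow_pos_of_pos (powMean_pos (show 1 ≤ a by lia) (zero_lt_one.trans_le hx)) (1 / 3)
  set b := powMean a x ^ (1 / 3 : ℝ) / 720 * a ^ 2
  have hgauss : Integrable fun θ : ℝ => exp (-b * θ ^ 2) :=
    integrable_exp_neg_mul_sq (by positivity)
  have hE_sub : E ⊆ Set.Icc (-π) π := fun θ hθ => abs_le.1 (hEπ θ hθ)
  have hE_fin : volume E ≠ ⊤ := measure_ne_top_of_subset hE_sub measure_Icc_lt_top.ne
  have hE_vol : volume.real E ≤ 2 * π := by
    calc volume.real E ≤ volume.real (Set.Icc (-π) π) :=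
          measureReal_mono hE_sub measure_Icc_lt_top.ne
      _ = 2 * π := by rw [volume_real_Icc_of_le (by linarith [pi_pos])]; ring
  have hconst : IntegrableOn (fun _ => exp (-(powMean a x / 4))) E := integrableOn_const hE_fin
  have hgaussE : IntegrableOn (fun θ => exp (-(powMean a x ^ (1 / 3 : ℝ) / 180)) *
      exp (-b * θ ^ 2)) E := hgauss.integrableOn.const_mul _
  refine (norm_integral_le_of_norm_le ((hconst.add hgaussE).const_mul (exp 4))
    (ae_restrict_of_forall_mem hE fun θ hθ =>
      norm_centeredCharFun_le_of_two_le ha hx (hEπ θ hθ) (hEa θ hθ) t)).trans ?_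
  rw [integral_const_mul]
  simp only [Pi.add_apply]
  rw [integral_add hconst hgaussE, integral_const_mul, setIntegral_const,
    smul_eq_mul, ← integral_gaussian b]
  gcongr exp 4 * (?_ * _ + _ * ?_)
  exact setIntegral_le_integral hgauss (ae_of_all _ fun _ => exp_nonneg _)

end OuterRegion

section SaddlePointLimit

lemma sizeVar_le_sq_mul_powMean {a : ℕ} {x : ℝ} (ha : 1 ≤ a) (hx : 0 ≤ x) :
    sizeVar a x ≤ a ^ 2 * powMean a x := by
  have ha0 : (a : ℝ) ≠ 0 := Nat.cast_ne_zero.2 (by lia)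
  calc sizeVar a x ≤ a * sizeMean a x := sizeVar_le hx
    _ = a ^ 2 * powMean a x := by rw [powMean]; field_simp

lemma sqrt_powMean_div_two_le {a : ℕ} {x : ℝ} (ha : 1 ≤ a) (hx : 1 ≤ x) :
    √(powMean a x / 2) ≤ √(sizeVar a x) / a := by
  have : (0 : ℝ) < a := Nat.cast_pos.2 ha
  refine sqrt_le_iff.2 ⟨by positivity, ?_⟩
  rw [div_pow, sq_sqrt (sizeVar_pos ha (by linarith)).le, le_div_iff₀ (by positivity)]
  calc powMean a x / 2 * a ^ 2 = sizeMean a x * (a / 2) := by rw [powMean]; field_simp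
    _ ≤ sizeMean a x * ((a + 1) / 2) := by
        have := sizeMean_pos ha (zero_lt_one.trans_le hx)
        gcongr
        linarith
    _ ≤ sizeVar a x := sizeMean_mul_le_sizeVar hx

lemma sqrt_sizeVar_mul_sqrt_le {a : ℕ} {x : ℝ} (ha : 1 ≤ a) (hx : 0 < x) :
    √(sizeVar a x) * √(π / (powMean a x ^ (1 / 3 : ℝ) / 720 * a ^ 2)) ≤
      √(720 * π) * powMean a x ^ (1 / 3 : ℝ) := by
  have : (0 : ℝ) < a := Nat.cast_pos.2 ha
  have hy0 := powMean_pos ha hx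
  have hr0 := rpow_pos_of_pos hy0 (1 / 3)
  set r := powMean a x ^ (1 / 3 : ℝ)
  have hcube : r ^ 3 = powMean a x := by rw [← rpow_mul_natCast hy0.le]; norm_num
  calc √(sizeVar a x) * √(π / (r / 720 * a ^ 2))
      = √(sizeVar a x * (π / (r / 720 * a ^ 2))) := (sqrt_mul' _ (by positivity)).symm
    _ ≤ √(a ^ 2 * r ^ 3 * (π / (r / 720 * a ^ 2))) := by
        gcongr
        rw [hcube]
        exact sizeVar_le_sq_mul_powMean ha hx.le
    _ = √(720 * π * r ^ 2) := by
        congr 1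
        field_simp
    _ = √(720 * π) * r := by rw [sqrt_mul' _ (sq_nonneg r), sqrt_sq hr0.le]

lemma sqrt_sizeVar_mul_norm_setIntegral_le {a : ℕ} {x : ℝ} (ha : 2 ≤ a) (hx : 1 ≤ x) {E : Set ℝ}
    (hE : MeasurableSet E) (hEπ : ∀ θ ∈ E, |θ| ≤ π) (hEa : ∀ θ ∈ E, 2 ≤ a * |θ|) (t : ℝ) :
    √(sizeVar a x) * ‖∫ θ in E, centeredCharFun a x t θ‖ ≤
      exp 4 * (2 * π * (√(sizeVar a x) * exp (-(powMean a x / 4))) +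
        √(720 * π) * (powMean a x ^ (1 / 3 : ℝ) * exp (-(powMean a x ^ (1 / 3 : ℝ) / 180)))) := by
  set r := powMean a x ^ (1 / 3 : ℝ)
  calc √(sizeVar a x) * ‖∫ θ in E, centeredCharFun a x t θ‖
      ≤ √(sizeVar a x) * (exp 4 * (2 * π * exp (-(powMean a x / 4)) +
          exp (-(r / 180)) * √(π / (r / 720 * a ^ 2)))) := by
        gcongr
        exact norm_setIntegral_centeredCharFun_le ha hx hE hEπ hEa t
    _ = exp 4 * (2 * π * (√(sizeVar a x) * exp (-(powMean a x / 4))) +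
          (√(sizeVar a x) * √(π / (r / 720 * a ^ 2))) * exp (-(r / 180))) := by ring
    _ ≤ exp 4 * (2 * π * (√(sizeVar a x) * exp (-(powMean a x / 4))) +
          √(720 * π) * r * exp (-(r / 180))) := by
        gcongr exp 4 * (_ + ?_ * _)
        exact sqrt_sizeVar_mul_sqrt_le (by lia) (by linarith)
    _ = _ := by rw [mul_assoc √(720 * π)]

lemma tendsto_mul_exp_neg_div_atTop {b : ℝ} (hb : 0 < b) :
    Tendsto (fun r : ℝ => r * exp (-(r / b))) atTop (𝓝 0) := by
  have h := ((tendsto_pow_mul_exp_neg_atTop_nhds_zero 1).comp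
    (tendsto_id.atTop_div_const hb)).const_mul b
  rw [mul_zero] at h
  refine h.congr fun r => ?_
  simp only [Function.comp_apply, id_eq, pow_one]
  field_simp

variable {ι : Type*} {l : Filter ι} {a : ι → ℕ} {x t : ι → ℝ} {c : ℝ}

lemma tendsto_sqrt_sizeVar_mul_setIntegral {E : ι → Set ℝ} (ha : ∀ᶠ i in l, 2 ≤ a i)
    (hx : ∀ᶠ i in l, 1 ≤ x i) (hy : Tendsto (fun i => powMean (a i) (x i)) l atTop)
    (hvar : Tendsto (fun i => √(sizeVar (a i) (x i)) * exp (-(powMean (a i) (x i) / 4))) l (𝓝 0))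
    (hE : ∀ i, MeasurableSet (E i)) (hEπ : ∀ i, ∀ θ ∈ E i, |θ| ≤ π)
    (hEa : ∀ᶠ i in l, ∀ θ ∈ E i, 2 ≤ a i * |θ|) :
    Tendsto (fun i => (√(sizeVar (a i) (x i)) : ℂ) *
      ∫ θ in E i, centeredCharFun (a i) (x i) (t i) θ) l (𝓝 0) := by
  have hroot := (tendsto_rpow_atTop (show (0 : ℝ) < 1 / 3 by norm_num)).comp hy
  have hdecay := (tendsto_mul_exp_neg_div_atTop (show (0 : ℝ) < 180 by norm_num)).comp hroot
  have hbound := ((hvar.const_mul (2 * π)).add (hdecay.const_mul √(720 * π))).const_mul (exp 4)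
  simp only [mul_zero, add_zero] at hbound
  refine squeeze_zero_norm' ?_ hbound
  filter_upwards [ha, hx, hEa] with i hai hxi hEi
  rw [norm_mul, Complex.norm_of_nonneg (sqrt_nonneg _)]
  exact sqrt_sizeVar_mul_norm_setIntegral_le hai hxi (hE i) (hEπ i) hEi (t i)

lemma tendsto_mul_abs_div_sqrt_sizeVar (ha : ∀ᶠ i in l, 1 ≤ a i) (hx : ∀ᶠ i in l, 1 ≤ x i)
    (hy : Tendsto (fun i => powMean (a i) (x i)) l atTop) (u : ℝ) :
    Tendsto (fun i => a i * |u / √(sizeVar (a i) (x i))|) l (𝓝 0) := by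
  have hscale : Tendsto (fun i => √(sizeVar (a i) (x i)) / a i) l atTop := by
    refine tendsto_atTop_mono' l ?_ (tendsto_sqrt_atTop.comp (hy.atTop_div_const two_pos))
    filter_upwards [ha, hx] with i hai hxi using sqrt_powMean_div_two_le hai hxi
  have h := hscale.inv_tendsto_atTop.const_mul |u|
  rw [mul_zero] at h
  refine h.congr fun i => ?_
  rw [Pi.inv_apply, inv_div, abs_div, abs_of_nonneg (sqrt_nonneg _)]
  ring

lemma tendsto_centeredCharFun (ha : ∀ᶠ i in l, 1 ≤ a i) (hx : ∀ᶠ i in l, 1 ≤ x i)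
    (hy : Tendsto (fun i => powMean (a i) (x i)) l atTop) (ht : Tendsto t l (𝓝 0))
    (hc : Tendsto (fun i => t i ^ 2 * cycleVar (a i) (x i)) l (𝓝 c)) (u : ℝ) :
    Tendsto (fun i => centeredCharFun (a i) (x i) (t i)
        (u / √(sizeVar (a i) (x i)) - t i * regressionSlope (a i) (x i))) l
      (𝓝 (Complex.exp (-(c + u ^ 2) / 2 : ℝ))) := by
  have hδ : Tendsto (fun i => |t i| + a i * |u / √(sizeVar (a i) (x i))|) l (𝓝 0) := by
    simpa using ht.abs.add (tendsto_mul_abs_div_sqrt_sizeVar ha hx hy u)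
  have hquad := hc.add_const (u ^ 2)
  have hexpand : ∀ᶠ i in l, ∃ ε : ℂ,
      ‖ε‖ ≤ (|t i| + a i * |u / √(sizeVar (a i) (x i))|) *
        (t i ^ 2 * cycleVar (a i) (x i) + u ^ 2) * exp 1 ∧
      centeredCharFun (a i) (x i) (t i)
        (u / √(sizeVar (a i) (x i)) - t i * regressionSlope (a i) (x i)) =
        Complex.exp ((-(t i ^ 2 * cycleVar (a i) (x i) + u ^ 2) / 2 : ℝ) + ε) := by
    filter_upwards [ha, hx, hδ.eventually_le_const one_pos] with i hai hxi hδi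
    have hS := sizeVar_pos hai (zero_lt_one.trans_le hxi)
    have hu : (u / √(sizeVar (a i) (x i))) ^ 2 * sizeVar (a i) (x i) = u ^ 2 := by
      rw [div_pow, sq_sqrt hS.le, div_mul_cancel₀ _ hS.ne']
    have h := centeredCharFun_eq_cexp_add hai hxi hδi
    rwa [hu] at h
  rcases l.eq_or_neBot with rfl | _
  · exact tendsto_bot
  obtain ⟨ε, hε⟩ := hexpand.choice
  have hε0 : Tendsto ε l (𝓝 0) := by
    have h := (hδ.mul hquad).mul_const (exp 1)
    rw [zero_mul, zero_mul] at h
    exact squeeze_zero_norm' (hε.mono fun i hi => hi.1) h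
  have hlim := ((Complex.continuous_ofReal.tendsto _).comp (hquad.neg.div_const 2)).add hε0
  rw [add_zero] at hlim
  exact ((Complex.continuous_exp.tendsto _).comp hlim).congr' (hε.mono fun i hi => hi.2.symm)

/-- The range of `θ` contributing to the limit of `charIntegral a x t`: a neighbourhood of
`-t * regressionSlope a x`, the maximum of the Gaussian approximation to `centeredCharFun a x t`. -/
def saddleArc (a : ℕ) (x t : ℝ) : Set ℝ := {θ | a * |θ + t * regressionSlope a x| ≤ 5 / 2}

lemma measurableSet_saddleArc (a : ℕ) (x t : ℝ) : MeasurableSet (saddleArc a x t) :=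
  measurableSet_le (by fun_prop) measurable_const

lemma mul_abs_mul_regressionSlope_le {a : ℕ} {x t : ℝ} (hx : 1 ≤ x) (ht : |t| ≤ 1 / 4) :
    a * |t * regressionSlope a x| ≤ 1 / 2 := by
  have hslope := regressionSlope_nonneg (a := a) (zero_le_one.trans hx)
  calc a * |t * regressionSlope a x| = a * (|t| * regressionSlope a x) := by
        rw [abs_mul, abs_of_nonneg hslope]
    _ ≤ a * (1 / 4 * (2 / (a + 1))) := by
        gcongr
        exact regressionSlope_le hx
    _ ≤ 1 / 2 := by
        field_simp
        linarith

lemma abs_le_pi_of_mem_saddleArc {a : ℕ} {x t θ : ℝ} (ha : 1 ≤ a) (hx : 1 ≤ x) (ht : |t| ≤ 1 / 4)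
    (hθ : θ ∈ saddleArc a x t) : |θ| ≤ π := by
  have ha1 : (1 : ℝ) ≤ a := Nat.one_le_cast.2 ha
  have hθ' : a * |θ + t * regressionSlope a x| ≤ 5 / 2 := hθ
  calc |θ| ≤ a * |θ| := le_mul_of_one_le_left (abs_nonneg _) ha1
    _ = a * |θ + t * regressionSlope a x - t * regressionSlope a x| := by rw [add_sub_cancel_right]
    _ ≤ a * (|θ + t * regressionSlope a x| + |t * regressionSlope a x|) := by
        gcongr
        exact abs_sub _ _
    _ ≤ π := by linarith [mul_abs_mul_regressionSlope_le (a := a) hx ht, pi_gt_three]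

lemma two_le_mul_abs_of_notMem_saddleArc {a : ℕ} {x t θ : ℝ} (hx : 1 ≤ x) (ht : |t| ≤ 1 / 4)
    (hθ : θ ∉ saddleArc a x t) : 2 ≤ a * |θ| := by
  have hθ' : 5 / 2 < a * |θ + t * regressionSlope a x| := not_le.1 hθ
  have htri : a * |θ + t * regressionSlope a x| ≤ a * (|θ| + |t * regressionSlope a x|) := by
    gcongr
    exact abs_add_le _ _
  linarith [mul_abs_mul_regressionSlope_le (a := a) hx ht]

lemma mul_setIntegral_eq_integral_indicator {A : Set ℝ} (hA : MeasurableSet A) (f : ℝ → ℂ) {r : ℝ}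
    (hr : 0 ≤ r) (b : ℝ) : r * ∫ θ in A, f θ = ∫ u, A.indicator f (u / r - b) := by
  rw [Measure.integral_comp_div (fun θ => A.indicator f (θ - b)) r,
    integral_sub_right_eq_self (A.indicator f), integral_indicator hA, abs_of_nonneg hr,
    Complex.real_smul]

lemma norm_indicator_saddleArc_le {a : ℕ} {x t : ℝ} (ha : 1 ≤ a) (hx : 1 ≤ x) (ht : |t| ≤ 1 / 4)
    (u : ℝ) :
    ‖(saddleArc a x t).indicator (centeredCharFun a x t)
      (u / √(sizeVar a x) - t * regressionSlope a x)‖ ≤ exp (-(2 / π ^ 2) * u ^ 2) := by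
  have hS := sizeVar_pos ha (zero_lt_one.trans_le hx)
  set τ := u / √(sizeVar a x) with hτ
  by_cases hmem : τ - t * regressionSlope a x ∈ saddleArc a x t
  · have hτa : a * |τ| ≤ 5 / 2 := by simpa [saddleArc] using hmem
    have hu : u ^ 2 = τ ^ 2 * sizeVar a x := by
      rw [hτ, div_pow, sq_sqrt hS.le, div_mul_cancel₀ _ hS.ne']
    rw [Set.indicator_of_mem hmem, hu, neg_mul]
    refine (norm_centeredCharFun_le_gaussian ha hx (by linarith [pi_gt_three])).trans ?_
    gcongr
    exact le_add_of_nonneg_left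
      (mul_nonneg (sq_nonneg t) (cycleVar_nonneg ha (zero_lt_one.trans_le hx)))
  · rw [Set.indicator_of_notMem hmem, norm_zero]
    exact exp_nonneg _

lemma integral_cexp_neg_add_sq_div_two (c : ℝ) :
    ∫ u : ℝ, Complex.exp (-(c + u ^ 2) / 2 : ℝ) = (√(2 * π) * exp (-c / 2) : ℝ) := by
  have hexp (u : ℝ) : Complex.exp (-(c + u ^ 2) / 2 : ℝ) =
      (exp (-c / 2) * exp (-(1 / 2) * u ^ 2) : ℝ) := by
    rw [← Complex.ofReal_exp, ← exp_add]
    ring_nf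
  simp_rw [hexp]
  rw [integral_complex_ofReal, integral_const_mul, integral_gaussian, mul_comm, div_div_eq_mul_div,
    div_one, mul_comm π]

lemma tendsto_sqrt_sizeVar_mul_setIntegral_saddleArc [l.IsCountablyGenerated]
    (ha : ∀ᶠ i in l, 1 ≤ a i) (hx : ∀ᶠ i in l, 1 ≤ x i)
    (hy : Tendsto (fun i => powMean (a i) (x i)) l atTop) (ht : Tendsto t l (𝓝 0))
    (hc : Tendsto (fun i => t i ^ 2 * cycleVar (a i) (x i)) l (𝓝 c)) :
    Tendsto (fun i => (√(sizeVar (a i) (x i)) : ℂ) *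
        ∫ θ in saddleArc (a i) (x i) (t i), centeredCharFun (a i) (x i) (t i) θ) l
      (𝓝 (√(2 * π) * exp (-c / 2) : ℝ)) := by
  simp_rw [fun i => mul_setIntegral_eq_integral_indicator (measurableSet_saddleArc _ _ _)
    (centeredCharFun (a i) (x i) (t i)) (sqrt_nonneg (sizeVar (a i) (x i)))
    (t i * regressionSlope (a i) (x i)), ← integral_cexp_neg_add_sq_div_two]
  refine tendsto_integral_filter_of_dominated_convergence (fun u => exp (-(2 / π ^ 2) * u ^ 2))
    (.of_forall fun i => ?_) ?_ (integrable_exp_neg_mul_sq (by positivity))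
    (ae_of_all _ fun u => ?_)
  · have hmeas := (continuous_centeredCharFun (a i) (x i) (t i)).measurable.indicator
      (measurableSet_saddleArc (a i) (x i) (t i))
    exact (hmeas.comp (by fun_prop)).aestronglyMeasurable
  · filter_upwards [ha, hx, ht.abs.eventually_le_const (show |(0 : ℝ)| < 1 / 4 by norm_num)]
      with i hai hxi hti using ae_of_all _ (norm_indicator_saddleArc_le hai hxi hti)
  · refine (tendsto_centeredCharFun ha hx hy ht hc u).congr' ?_
    filter_upwards [(tendsto_mul_abs_div_sqrt_sizeVar ha hx hy u).eventually_le_const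
      (show (0 : ℝ) < 5 / 2 by norm_num)] with i hi
    exact (Set.indicator_of_mem (by simpa [saddleArc] using hi) _).symm

lemma tendsto_sqrt_sizeVar_mul_charIntegral [l.IsCountablyGenerated]
    (ha : ∀ᶠ i in l, 2 ≤ a i) (hx : ∀ᶠ i in l, 1 ≤ x i)
    (hy : Tendsto (fun i => powMean (a i) (x i)) l atTop)
    (hvar : Tendsto (fun i => √(sizeVar (a i) (x i)) * exp (-(powMean (a i) (x i) / 4))) l (𝓝 0))
    (ht : Tendsto t l (𝓝 0))
    (hc : Tendsto (fun i => t i ^ 2 * cycleVar (a i) (x i)) l (𝓝 c)) :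
    Tendsto (fun i => (√(sizeVar (a i) (x i)) : ℂ) * charIntegral (a i) (x i) (t i)) l
      (𝓝 (√(2 * π) * exp (-c / 2) : ℝ)) := by
  have ha1 : ∀ᶠ i in l, 1 ≤ a i := ha.mono fun i hi => by lia
  have ht4 : ∀ᶠ i in l, |t i| ≤ 1 / 4 :=
    ht.abs.eventually_le_const (show |(0 : ℝ)| < 1 / 4 by norm_num)
  have hinner := tendsto_sqrt_sizeVar_mul_setIntegral_saddleArc ha1 hx hy ht hc
  have houter := tendsto_sqrt_sizeVar_mul_setIntegral (t := t)
    (E := fun i => Set.Icc (-π) π \ saddleArc (a i) (x i) (t i)) ha hx hy hvar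
    (fun i => measurableSet_Icc.diff (measurableSet_saddleArc _ _ _))
    (fun i θ hθ => abs_le.2 hθ.1) (by
      filter_upwards [hx, ht4] with i hxi hti θ hθ
        using two_le_mul_abs_of_notMem_saddleArc hxi hti hθ.2)
  have hsum := hinner.add houter
  rw [add_zero] at hsum
  refine hsum.congr' ?_
  filter_upwards [ha1, hx, ht4] with i hai hxi hti
  have hsub : saddleArc (a i) (x i) (t i) ⊆ Set.Icc (-π) π :=
    fun θ hθ => abs_le.1 (abs_le_pi_of_mem_saddleArc hai hxi hti hθ)
  rw [← mul_add, charIntegral, intervalIntegral.integral_of_le (by linarith [pi_pos]),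
    ← integral_Icc_eq_integral_Ioc, ← integral_inter_add_sdiff (measurableSet_saddleArc _ _ _)
      (continuous_centeredCharFun (a i) (x i) (t i)).integrableOn_Icc,
    Set.inter_eq_self_of_subset_right hsub]

end SaddlePointLimit

section CycleVar

variable {a : ℕ} {x : ℝ}

lemma le_nine_mul_cycleVar (ha : 2 ≤ a) (hx : 1 ≤ x) : x ≤ 9 * cycleVar a x := by
  have ha2 : (2 : ℝ) ≤ a := Nat.ofNat_le_cast.2 ha
  have hβ : regressionSlope a x ≤ 2 / 3 := by
    calc regressionSlope a x ≤ 2 / (a + 1) := regressionSlope_le hx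
      _ ≤ 2 / 3 := by gcongr; linarith
  have hterm : x * (1 - regressionSlope a x) ^ 2 ≤ cycleVar a x := by
    rw [cycleVar_eq_sum (by lia) (by linarith)]
    simpa using single_le_sum (f := fun j : ℕ => x ^ j / j * (1 - j * regressionSlope a x) ^ 2)
      (fun j _ => by positivity) (mem_Icc.2 ⟨le_rfl, show 1 ≤ a by lia⟩)
  have hsq : (1 / 3) ^ 2 ≤ (1 - regressionSlope a x) ^ 2 := by
    gcongr
    linarith
  nlinarith [mul_le_mul_of_nonneg_left hsq (zero_le_one.trans hx)]

-- For `j ≤ (a + 1) / 4` the residual `1 - j * regressionSlope a x` is at least `1 / 2`, so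
-- `cycleVar a x` dominates a quarter of a harmonic sum.
lemma le_four_mul_exp_cycleVar (ha : 1 ≤ a) (hx : 1 ≤ x) : a ≤ 4 * exp (4 * cycleVar a x) := by
  have : (0 : ℝ) < a := Nat.cast_pos.2 ha
  have hsub : Icc 1 ((a + 1) / 4) ⊆ Icc 1 a := Icc_subset_Icc_right (by lia)
  have hterm : ∀ j ∈ Icc 1 ((a + 1) / 4),
      (j : ℝ)⁻¹ / 4 ≤ x ^ j / j * (1 - j * regressionSlope a x) ^ 2 := by
    intro j hj
    have hj4 : (4 * j : ℝ) ≤ a + 1 := by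
      exact_mod_cast (show 4 * j ≤ a + 1 by have := (mem_Icc.1 hj).2; lia)
    have hres : j * regressionSlope a x ≤ 1 / 2 := by
      calc j * regressionSlope a x ≤ j * (2 / (a + 1)) := by
            gcongr
            exact regressionSlope_le hx
        _ ≤ 1 / 2 := by
            field_simp
            linarith
    calc (j : ℝ)⁻¹ / 4 = 1 / j * (1 / 2) ^ 2 := by ring
      _ ≤ x ^ j / j * (1 - j * regressionSlope a x) ^ 2 := by
          gcongr
          exacts [one_le_pow₀ hx, by linarith]
  have hharm : log (a / 4) ≤ ∑ j ∈ Icc 1 ((a + 1) / 4), (j : ℝ)⁻¹ := by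
    have hfloor : (a / 4 : ℝ) ≤ ((a + 1) / 4 + 1 : ℕ) := by
      rw [div_le_iff₀ (by norm_num)]
      exact_mod_cast (show a ≤ ((a + 1) / 4 + 1) * 4 by lia)
    have h := log_add_one_le_harmonic ((a + 1) / 4)
    rw [harmonic_eq_sum_Icc] at h
    push_cast at h hfloor
    exact (log_le_log (by positivity) hfloor).trans h
  have hlog : log (a / 4) ≤ 4 * cycleVar a x := by
    have := (sum_le_sum hterm).trans
      (sum_le_sum_of_subset_of_nonneg hsub fun j _ _ => by positivity)
    rw [← sum_div, ← cycleVar_eq_sum ha (by linarith)] at this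
    linarith
  linarith [(log_le_iff_le_exp (by positivity)).1 hlog]

lemma powMean_le_pow (ha : 1 ≤ a) (hx : 1 ≤ x) : powMean a x ≤ x ^ a := by
  rw [powMean, div_le_iff₀ (Nat.cast_pos.2 ha), sizeMean]
  calc ∑ j ∈ Icc 1 a, x ^ j ≤ #(Icc 1 a) • x ^ a :=
        sum_le_card_nsmul _ _ _ fun j hj => pow_le_pow_right₀ hx (mem_Icc.1 hj).2
    _ = x ^ a * a := by rw [Nat.card_Icc, Nat.add_sub_cancel, nsmul_eq_mul, mul_comm]

lemma log_powMean_le_exp_cycleVar (ha : 2 ≤ a) (hx : 1 ≤ x) :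
    log (powMean a x) ≤ 36 * exp (5 * cycleVar a x) := by
  have ha1 : 1 ≤ a := by lia
  have hv := le_nine_mul_cycleVar ha hx
  calc log (powMean a x) ≤ log (x ^ a) :=
        log_le_log (powMean_pos ha1 (by linarith)) (powMean_le_pow ha1 hx)
    _ = a * log x := log_pow _ _
    _ ≤ 4 * exp (4 * cycleVar a x) * (9 * exp (cycleVar a x)) := by
        gcongr
        · exact log_nonneg hx
        · exact le_four_mul_exp_cycleVar ha1 hx
        · linarith [log_le_self (zero_le_one.trans hx), add_one_le_exp (cycleVar a x)]
    _ = 36 * exp (5 * cycleVar a x) := by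
        rw [mul_mul_mul_comm, ← exp_add]
        ring_nf

lemma tendsto_cycleVar_atTop {ι : Type*} {l : Filter ι} {a : ι → ℕ} {x : ι → ℝ}
    (ha : ∀ᶠ i in l, 2 ≤ a i) (hx : ∀ᶠ i in l, 1 ≤ x i)
    (hy : Tendsto (fun i => powMean (a i) (x i)) l atTop) :
    Tendsto (fun i => cycleVar (a i) (x i)) l atTop := by
  have hexp : Tendsto (fun i => 36 * exp (5 * cycleVar (a i) (x i))) l atTop := by
    refine tendsto_atTop_mono' l ?_ (tendsto_log_atTop.comp hy)
    filter_upwards [ha, hx] with i hai hxi using log_powMean_le_exp_cycleVar hai hxi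
  exact (tendsto_const_mul_atTop_of_pos (by norm_num)).1
    (tendsto_exp_comp_atTop.1 ((tendsto_const_mul_atTop_of_pos (by norm_num)).1 hexp))

lemma sizeVar_mul_sub_one (a : ℕ) (x : ℝ) :
    sizeVar a x * (x - 1) = a * x ^ (a + 1) - sizeMean a x := by
  unfold sizeVar sizeMean
  induction a with
  | zero => simp
  | succ a ih =>
    rw [sum_Icc_succ_top (by lia), sum_Icc_succ_top (by lia), add_mul, ih]
    push_cast
    ring

lemma cycleMean_add_eq_cycleVar {n : ℝ} (hn : n ≠ 0) (hx0 : x ≠ 0) (hx1 : x ≠ 1)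
    (h : sizeMean a x = n) :
    cycleMean a x + n * ((x - 1) * x / (1 - a * (x - 1) - a * x / n)) / x = cycleVar a x := by
  have hgeom : (x - 1) * n = x ^ (a + 1) - x := by
    rw [← h, sizeMean, sub_one_mul_sum_Icc_one_pow]
  have hden : 1 - a * (x - 1) - a * x / n = -(sizeVar a x * (x - 1)) / n := by
    rw [sizeVar_mul_sub_one, h]
    field_simp
    linear_combination -(a : ℝ) * hgeom
  rw [hden, cycleVar, h]
  have hx1' := sub_ne_zero.2 hx1
  field_simp
  ring

end CycleVar

section UniformLaw

/-- The law of `Y σ` when `σ` is drawn uniformly from the finite set `S`; the zero measure if `S` is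
empty. -/
noncomputable def uniformLaw {Ω : Type*} (S : Finset Ω) (Y : Ω → ℝ) : Measure ℝ :=
  (#S : ENNReal)⁻¹ • ∑ σ ∈ S, Measure.dirac (Y σ)

variable {Ω : Type*} {S : Finset Ω}

lemma isProbabilityMeasure_uniformLaw (hS : S.Nonempty) (Y : Ω → ℝ) :
    IsProbabilityMeasure (uniformLaw S Y) where
  measure_univ := by
    simp only [uniformLaw, Measure.smul_apply, Measure.finsetSum_apply, measure_univ, smul_eq_mul,
      sum_const, nsmul_eq_mul, mul_one]
    exact ENNReal.inv_mul_cancel (Nat.cast_ne_zero.2 hS.card_ne_zero) (ENNReal.natCast_ne_top _)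

lemma charFun_uniformLaw (S : Finset Ω) (Y : Ω → ℝ) (s : ℝ) :
    charFun (uniformLaw S Y) s = (∑ σ ∈ S, Complex.exp ((s * Y σ : ℝ) * Complex.I)) / #S := by
  rw [charFun_apply_real, uniformLaw, integral_smul_measure,
    integral_finsetSum_measure fun _ _ => integrable_dirac (by simp)]
  simp only [integral_dirac, ENNReal.toReal_inv, ENNReal.toReal_natCast]
  rw [Complex.real_smul, div_eq_inv_mul]
  push_cast
  rfl

lemma uniformLaw_real_Iic (S : Finset Ω) (Y : Ω → ℝ) (z : ℝ) [DecidablePred fun σ => Y σ ≤ z] :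
    (uniformLaw S Y).real (Set.Iic z) = (#{σ ∈ S | Y σ ≤ z} : ℝ) / #S := by
  have hdirac (σ : Ω) : (Measure.dirac (Y σ) (Set.Iic z)).toReal = if Y σ ≤ z then 1 else 0 := by
    rw [Measure.dirac_apply' _ measurableSet_Iic]
    by_cases h : Y σ ≤ z <;> simp [h]
  rw [measureReal_def, uniformLaw, Measure.smul_apply, Measure.finsetSum_apply, smul_eq_mul,
    ENNReal.toReal_mul, ENNReal.toReal_inv, ENNReal.toReal_natCast,
    ENNReal.toReal_sum fun _ _ => measure_ne_top _ _, div_eq_inv_mul,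
    sum_congr rfl fun σ _ => hdirac σ, sum_boole]

lemma gaussianReal_real_Iic (z : ℝ) :
    (gaussianReal 0 1).real (Set.Iic z) = (√(2 * π))⁻¹ * ∫ t in Set.Iic z, exp (-t ^ 2 / 2) := by
  rw [measureReal_def, gaussianReal_apply_eq_integral _ one_ne_zero, ENNReal.toReal_ofReal
    (integral_nonneg fun _ => gaussianPDFReal_nonneg _ _ _)]
  simp only [gaussianPDFReal_def, NNReal.coe_one, mul_one, sub_zero]
  exact integral_const_mul _ _

lemma tendsto_uniformLaw_real_Iic {Ω : ℕ → Type*} {S : ∀ n, Finset (Ω n)} {Y : ∀ n, Ω n → ℝ}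
    (hS : ∀ n, (S n).Nonempty)
    (h : ∀ s : ℝ, Tendsto (fun n => charFun (uniformLaw (S n) (Y n)) s) atTop
      (𝓝 (exp (-s ^ 2 / 2) : ℝ))) (z : ℝ) :
    Tendsto (fun n => (uniformLaw (S n) (Y n)).real (Set.Iic z)) atTop
      (𝓝 ((gaussianReal 0 1).real (Set.Iic z))) := by
  let μ : ℕ → ProbabilityMeasure ℝ := fun n =>
    ⟨uniformLaw (S n) (Y n), isProbabilityMeasure_uniformLaw (hS n) (Y n)⟩
  let γ : ProbabilityMeasure ℝ := ⟨gaussianReal 0 1, inferInstance⟩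
  have hμγ : Tendsto μ atTop (𝓝 γ) := by
    refine ProbabilityMeasure.tendsto_iff_tendsto_charFun.2 fun s => ?_
    have hγ : charFun (γ : Measure ℝ) s = (exp (-s ^ 2 / 2) : ℝ) := by
      simp [γ, charFun_gaussianReal, neg_div]
    rw [hγ]
    exact h s
  have hfrontier : (γ : Measure ℝ) (frontier (Set.Iic z)) = 0 := by
    have : NullSingletonClass (γ : Measure ℝ) := nullSingletonClass_gaussianReal one_ne_zero
    rw [frontier_Iic]
    exact measure_singleton z
  exact (ENNReal.tendsto_toReal (measure_ne_top _ _)).comp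
    (ProbabilityMeasure.tendsto_measure_of_null_frontier_of_tendsto' hμγ hfrontier)

end UniformLaw

section CentralLimit

lemma Snalpha_nonempty (n a : ℕ) : (Snalpha n a).Nonempty :=
  ⟨1, by simp [Snalpha]⟩

lemma sum_Snalpha_cexp_numCycles_div_card {n a : ℕ} {x : ℝ} (ha : 1 ≤ a) (hx : 0 < x)
    (hn : sizeMean a x = n) (t : ℝ) :
    (∑ σ ∈ Snalpha n a, Complex.exp ((t * (numCycles σ - cycleMean a x) : ℝ) * Complex.I)) /
      #(Snalpha n a) = charIntegral a x t / charIntegral a x 0 := by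
  have hcard : (#(Snalpha n a) : ℂ) =
      n ! * Complex.exp (cycleMean a x) / (2 * π * x ^ n) * charIntegral a x 0 := by
    simpa using sum_Snalpha_cexp_numCycles ha hx hn 0
  have hfactor : (n ! * Complex.exp (cycleMean a x) / (2 * π * x ^ n) : ℂ) ≠ 0 := by
    simp [n.factorial_ne_zero, hx.ne']
  rw [hcard, sum_Snalpha_cexp_numCycles ha hx hn, mul_div_mul_left _ _ hfactor]

variable {α : ℕ → ℕ} {x : ℕ → ℝ}

lemma tendsto_charIntegral_div (ha : ∀ᶠ n in atTop, 2 ≤ α n) (hx : ∀ᶠ n in atTop, 1 ≤ x n)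
    (hy : Tendsto (fun n => powMean (α n) (x n)) atTop atTop)
    (hvar : Tendsto (fun n => √(sizeVar (α n) (x n)) * exp (-(powMean (α n) (x n) / 4))) atTop
      (𝓝 0)) (s : ℝ) :
    Tendsto (fun n => charIntegral (α n) (x n) (s / √(cycleVar (α n) (x n))) /
      charIntegral (α n) (x n) 0) atTop (𝓝 (exp (-s ^ 2 / 2) : ℝ)) := by
  have hv := tendsto_cycleVar_atTop ha hx hy
  have ht : Tendsto (fun n => s / √(cycleVar (α n) (x n))) atTop (𝓝 0) :=
    (tendsto_sqrt_atTop.comp hv).const_div_atTop s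
  have hc : Tendsto (fun n => (s / √(cycleVar (α n) (x n))) ^ 2 * cycleVar (α n) (x n)) atTop
      (𝓝 (s ^ 2)) := by
    refine tendsto_const_nhds.congr' ?_
    filter_upwards [hv.eventually_gt_atTop 0] with n hn
    rw [div_pow, sq_sqrt hn.le, div_mul_cancel₀ _ hn.ne']
  have hs := tendsto_sqrt_sizeVar_mul_charIntegral ha hx hy hvar ht hc
  have h0 := tendsto_sqrt_sizeVar_mul_charIntegral ha hx hy hvar (t := fun _ => 0) (c := 0)
    tendsto_const_nhds (by simp)
  have hpi : √(2 * π) ≠ 0 := by positivity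
  have hdiv := hs.div h0 (by simpa using hpi)
  rw [← Complex.ofReal_div, neg_zero, zero_div, exp_zero, mul_one,
    mul_div_cancel_left₀ _ hpi] at hdiv
  refine hdiv.congr' ?_
  filter_upwards [ha, hx] with n han hxn
  have hS := sizeVar_pos (show 1 ≤ α n by lia) (zero_lt_one.trans_le hxn)
  exact mul_div_mul_left _ _ (Complex.ofReal_ne_zero.2 (sqrt_pos.2 hS).ne')

lemma tendsto_charFun_uniformLaw (ha : ∀ᶠ n in atTop, 2 ≤ α n) (hx : ∀ᶠ n in atTop, 1 ≤ x n)
    (hn : ∀ᶠ n in atTop, sizeMean (α n) (x n) = n)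
    (hy : Tendsto (fun n => powMean (α n) (x n)) atTop atTop)
    (hvar : Tendsto (fun n => √(sizeVar (α n) (x n)) * exp (-(powMean (α n) (x n) / 4))) atTop
      (𝓝 0)) (s : ℝ) :
    Tendsto (fun n => charFun (uniformLaw (Snalpha n (α n)) fun σ =>
      (numCycles σ - cycleMean (α n) (x n)) / √(cycleVar (α n) (x n))) s) atTop
      (𝓝 (exp (-s ^ 2 / 2) : ℝ)) := by
  refine (tendsto_charIntegral_div ha hx hy hvar s).congr' ?_
  filter_upwards [ha, hx, hn] with n han hxn hnn
  rw [charFun_uniformLaw, ← sum_Snalpha_cexp_numCycles_div_card (by lia) (by linarith) hnn]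
  simp_rw [mul_div_assoc', mul_div_right_comm]

end CentralLimit

section Growth

variable {α : ℕ → ℕ} {x : ℕ → ℝ}

lemma tendsto_zero_of_mul_le {ι : Type*} {l : Filter ι} {f g : ι → ℝ} {c : ℝ}
    (hf : ∀ᶠ i in l, 0 ≤ f i) (hg : Tendsto g l atTop) (h : ∀ᶠ i in l, f i * g i ≤ c) :
    Tendsto f l (𝓝 0) := by
  refine squeeze_zero' hf ?_ (hg.const_div_atTop c)
  filter_upwards [h, hg.eventually_gt_atTop 0] with i hi hgi using (le_div_iff₀ hgi).2 hi

lemma tendsto_div_mul_log_zero {c : ℝ}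
    (h : ∀ᶠ n : ℕ in atTop, (α n : ℝ) / n * log n * log (log n) ^ 2 ≤ c) :
    Tendsto (fun n : ℕ => (α n : ℝ) / n * log n) atTop (𝓝 0) := by
  refine tendsto_zero_of_mul_le (.of_forall fun n => ?_) ?_ h
  · have := log_natCast_nonneg n
    positivity
  · exact (tendsto_pow_atTop two_ne_zero).comp
      (tendsto_log_atTop.comp (tendsto_log_atTop.comp tendsto_natCast_atTop_atTop))

lemma eventually_mul_log_le_powMean (ha : ∀ᶠ n in atTop, 1 ≤ α n)
    (hα : Tendsto (fun n : ℕ => (α n : ℝ) / n * log n) atTop (𝓝 0))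
    (hn : ∀ᶠ n in atTop, sizeMean (α n) (x n) = n) {K : ℝ} (hK : 0 < K) :
    ∀ᶠ n : ℕ in atTop, K * log n ≤ powMean (α n) (x n) := by
  filter_upwards [ha, hn, hα.eventually_le_const (inv_pos.2 hK), eventually_gt_atTop 0]
    with n han hnn hαn hn0
  have ha0 : (0 : ℝ) < α n := Nat.cast_pos.2 han
  have : (0 : ℝ) < n := Nat.cast_pos.2 hn0
  rw [powMean, hnn, le_div_iff₀ ha0]
  calc K * log n * α n = n * K * (α n / n * log n) := by field_simp
    _ ≤ n * K * K⁻¹ := by gcongr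
    _ = n := by field_simp

lemma tendsto_powMean_atTop (ha : ∀ᶠ n in atTop, 1 ≤ α n)
    (hα : Tendsto (fun n : ℕ => (α n : ℝ) / n * log n) atTop (𝓝 0))
    (hn : ∀ᶠ n in atTop, sizeMean (α n) (x n) = n) :
    Tendsto (fun n => powMean (α n) (x n)) atTop atTop := by
  refine tendsto_atTop_mono' _ ?_ (tendsto_log_atTop.comp tendsto_natCast_atTop_atTop)
  filter_upwards [eventually_mul_log_le_powMean ha hα hn one_pos] with n hn
  simpa using hn

lemma one_lt_of_one_lt_powMean {a : ℕ} {x : ℝ} (hx : 0 ≤ x) (h : 1 < powMean a x) : 1 < x := by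
  contrapose! h
  refine div_le_one_of_le₀ ?_ a.cast_nonneg
  calc ∑ j ∈ Icc 1 a, x ^ j ≤ ∑ _ ∈ Icc 1 a, (1 : ℝ) := sum_le_sum fun j _ => pow_le_one₀ hx h
    _ = a := by simp

lemma tendsto_sqrt_sizeVar_mul_exp_neg_powMean (ha : ∀ᶠ n in atTop, 1 ≤ α n)
    (hα : Tendsto (fun n : ℕ => (α n : ℝ) / n * log n) atTop (𝓝 0))
    (hx : ∀ᶠ n in atTop, 1 ≤ x n) (hn : ∀ᶠ n in atTop, sizeMean (α n) (x n) = n) :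
    Tendsto (fun n => √(sizeVar (α n) (x n)) * exp (-(powMean (α n) (x n) / 4))) atTop (𝓝 0) := by
  refine squeeze_zero' (.of_forall fun n => by positivity) ?_ tendsto_inv_atTop_nhds_zero_nat
  filter_upwards [hx, hn, eventually_mul_log_le_powMean ha hα hn (show (0 : ℝ) < 8 by norm_num),
    eventually_gt_atTop 0] with n hxn hnn hlog hn0
  have hn0' : (0 : ℝ) < n := Nat.cast_pos.2 hn0
  have han' : (α n : ℝ) ≤ n := by
    rw [← hnn, sizeMean]
    simpa using sum_le_sum fun j (_ : j ∈ Icc 1 (α n)) => one_le_pow₀ hxn (n := j)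
  have hsqrt : √(sizeVar (α n) (x n)) ≤ n := by
    refine sqrt_le_iff.2 ⟨hn0'.le, ?_⟩
    calc sizeVar (α n) (x n) ≤ α n * n := hnn ▸ sizeVar_le (by linarith)
      _ ≤ n ^ 2 := by rw [sq]; gcongr
  calc √(sizeVar (α n) (x n)) * exp (-(powMean (α n) (x n) / 4)) ≤ n * exp (-(2 * log n)) := by
        gcongr
        linarith
    _ = (n : ℝ)⁻¹ := by
        rw [exp_neg, two_mul, exp_add, exp_log hn0']
        field_simp

end Growth

end BoundedCycles

open scoped Classical in
open Filter Real BoundedCycles in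
theorem stmt_0_general (α : ℕ → ℕ) (hα2 : ∀ᶠ n in atTop, 2 ≤ α n)
    (hα : Tendsto (fun n : ℕ => (α n : ℝ) / n * Real.log n) atTop (nhds 0))
    (x : ℕ → ℝ)
    (hx : ∀ᶠ n in atTop, 0 < x n ∧ ∑ j ∈ Finset.Icc 1 (α n), x n ^ j = (n : ℝ))
    (m v : ℕ → ℝ)
    (hm : ∀ n, m n = ∑ j ∈ Finset.Icc 1 (α n), x n ^ j / j)
    (hv : ∀ n, v n = m n + (n : ℝ) *
      ((x n - 1) * x n / (1 - (α n : ℝ) * (x n - 1) - (α n : ℝ) * x n / n)) / x n)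
    (z : ℝ) :
    Tendsto (fun n =>
        (((Snalpha n (α n)).filter
            (fun σ => (numCycles σ : ℝ) - m n ≤ z * Real.sqrt (v n))).card : ℝ)
          / ((Snalpha n (α n)).card : ℝ))
      atTop
      (nhds ((Real.sqrt (2 * π))⁻¹ * ∫ t in Set.Iic z, Real.exp (-t ^ 2 / 2))) := by
  have hα1 : ∀ᶠ n in atTop, 1 ≤ α n := hα2.mono fun n hn => by lia
  have hmean : ∀ᶠ n in atTop, sizeMean (α n) (x n) = n := hx.mono fun n hn => hn.2
  have hy := tendsto_powMean_atTop hα1 hα hmean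
  have hx1 : ∀ᶠ n in atTop, 1 < x n := by
    filter_upwards [hx, hy.eventually_gt_atTop 1] with n hxn hyn
      using one_lt_of_one_lt_powMean hxn.1.le hyn
  have hx1' : ∀ᶠ n in atTop, 1 ≤ x n := hx1.mono fun n hn => hn.le
  have hvar := tendsto_sqrt_sizeVar_mul_exp_neg_powMean hα1 hα hx1' hmean
  have hcv := tendsto_cycleVar_atTop hα2 hx1' hy
  rw [← gaussianReal_real_Iic]
  refine (tendsto_uniformLaw_real_Iic (fun n => Snalpha_nonempty n (α n))
    (tendsto_charFun_uniformLaw hα2 hx1' hmean hy hvar) z).congr' ?_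
  filter_upwards [hx1, hmean, hcv.eventually_gt_atTop 0, eventually_ne_atTop 0]
    with n hxn hmeann hcvn hn0
  have hvn : v n = cycleVar (α n) (x n) := by
    rw [hv, hm, ← cycleMean_add_eq_cycleVar (Nat.cast_ne_zero.2 hn0) (by linarith) hxn.ne' hmeann,
      cycleMean]
  rw [uniformLaw_real_Iic, hvn, hm, ← cycleMean]
  simp_rw [div_le_iff₀ (sqrt_pos.2 hcvn)]

open scoped Classical in
open Filter Real in
/-- central limit theorem for the number of cycles of random
permutations without long cycles.  Assume `liminf α(n) ≥ 4` (i.e. eventually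
`α(n) ≥ 4`) and `limsup (α(n)/n)·log n·(log log n)² < 1/(12π²e)` (i.e. the
sequence is eventually bounded by some constant strictly below `1/(12π²e)`).
Let `x n` be the positive solution of `∑_{j=1}^{α(n)} x^j = n` (the saddle point
`x_{n,α}(1)`), and let `m n`, `v n` be defined as in the paper, where the
derivative `x'_{n,α}(1)` is given by its explicit formula.  Then for every real
`z`, the proportion of permutations `σ ∈ S_{n,α}` with
`C(σ) − m n ≤ z √(v n)` converges to `Φ(z) = (2π)^{-1/2} ∫_{-∞}^z e^{-t²/2} dt`. -/
theorem stmt_0 (α : ℕ → ℕ) (hα1 : ∀ n, 1 ≤ α n)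
    (hliminf : ∀ᶠ n in atTop, 4 ≤ α n)
    (hlimsup : ∃ c : ℝ, c < 1 / (12 * π ^ 2 * Real.exp 1) ∧
      ∀ᶠ n in atTop,
        (α n : ℝ) / n * Real.log n * (Real.log (Real.log n)) ^ 2 ≤ c)
    (x : ℕ → ℝ)
    (hx : ∀ n, 1 ≤ n → 0 < x n ∧ ∑ j ∈ Finset.Icc 1 (α n), x n ^ j = (n : ℝ))
    (m v : ℕ → ℝ)
    (hm : ∀ n, m n = ∑ j ∈ Finset.Icc 1 (α n), x n ^ j / j)
    (hv : ∀ n, v n = m n + (n : ℝ) *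
      ((x n - 1) * x n / (1 - (α n : ℝ) * (x n - 1) - (α n : ℝ) * x n / n)) / x n)
    (z : ℝ) :
    Tendsto (fun n =>
        (((Snalpha n (α n)).filter
            (fun σ => (numCycles σ : ℝ) - m n ≤ z * Real.sqrt (v n))).card : ℝ)
          / ((Snalpha n (α n)).card : ℝ))
      atTop
      (nhds ((Real.sqrt (2 * π))⁻¹ * ∫ t in Set.Iic z, Real.exp (-t ^ 2 / 2))) := by
  obtain ⟨c, -, hc⟩ := hlimsup
  exact stmt_0_general α (hliminf.mono fun n hn => by lia)
    (BoundedCycles.tendsto_div_mul_log_zero hc) x ((eventually_ge_atTop 1).mono hx) m v hm hv z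
end

section
/- Suppose α : ℕ → ℕ is such that there exist α₀, α₁ ∈ (0,1) with liminf_{n→∞} n^{−α₀}·α(n) = ∞ and limsup_{n→∞} n^{−α₁}·α(n) = 0. Then for every N ∈ ℕ, as n → ∞, m_{n,α} = (n/α(n))·∑_{k=0}^{N} k!/ξ(n/α(n))^k + o( (n/α(n))·ξ(n/α(n))^{−N} ); i.e. m_{n,α} has the asymptotic expansion (n/α(n))·∑_{k=0}^{∞} k!/ξ(n/α(n))^k. -/
/-!
Expanding `1 / j = (1 / a) * ∑ k, (1 - j / a) ^ k` in `∑ j ∈ Icc 1 a, x ^ j / j` turns the sum into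
`n / a` times the sum of the moments `M k` of `1 - J / a`, where `J` has law proportional to
`x ^ J` on `{1, …, a}`. Summation by parts gives `a * (x - 1) * M (k + 1) ≈ (k + 1) * M k`, which is
the recurrence of the moments `k! / μ ^ k` of an exponential law of rate `μ = a * (x - 1)`.
Since `x ^ a - 1 = n * (x - 1) / x`, the quantity `a * log x` solves `exp s = 1 + (n / a) * s` up to
a factor `x` close to `1`, so `μ` is close to the root `ξ = ξ (n / a)`. All errors are
smaller than every power of `log n`, while `ξ = O(log n)`.
-/

open Finset Filter Asymptotics Topology

lemma sub_one_mul_sum_Icc_pow_mul {R : Type*} [CommRing R] (x : R) (f : ℕ → R) (a : ℕ) :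
    (x - 1) * ∑ j ∈ Icc 1 a, x ^ j * f j =
      ∑ j ∈ Icc 1 a, x ^ j * (f (j - 1) - f j) + x ^ (a + 1) * f a - x * f 0 := by
  induction a with
  | zero => simp
  | succ a ih =>
    rw [sum_Icc_succ_top (by omega), sum_Icc_succ_top (by omega), mul_add, ih, Nat.add_sub_cancel]
    ring

lemma abs_add_pow_succ_sub_sub_le {t h : ℝ} (ht : 0 ≤ t) (hh : 0 ≤ h) (hth : t + h ≤ 1) (k : ℕ) :
    |(t + h) ^ (k + 1) - t ^ (k + 1) - (k + 1) * h * t ^ k| ≤ (k + 1) * k * h ^ 2 := by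
  have lower := pow_add_mul_le_add_pow ht (by linarith : 0 ≤ 2 * t + h) (k + 1)
  have upper := pow_add_mul_le_add_pow (b := -h) (by linarith : 0 ≤ t + h) (by linarith) (k + 1)
  have lipschitz : (t + h) ^ k - t ^ k ≤ h * k := by
    refine (le_abs_self _).trans ((abs_pow_sub_pow_le _ _ _).trans ?_)
    rw [add_sub_cancel_left, abs_of_nonneg hh, abs_of_nonneg ht, abs_of_nonneg (add_nonneg ht hh),
      max_eq_left (by linarith)]
    exact mul_le_of_le_one_right (by positivity) (pow_le_one₀ (by linarith) hth)
  have scaled := mul_le_mul_of_nonneg_left lipschitz (by positivity : 0 ≤ (k + 1) * h)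
  simp only [Nat.add_sub_cancel, add_neg_cancel_right, Nat.cast_add, Nat.cast_one] at lower upper
  rw [abs_of_nonneg (by linarith)]
  linarith

/-- The numerator of the `k`-th moment of `1 - J / a`, where `J ∈ {1, …, a}` is drawn with
probability proportional to `x ^ J`. At `k = 0` this is the normalising sum. -/
noncomputable def tiltedMoment (x : ℝ) (a k : ℕ) : ℝ :=
  ∑ j ∈ Icc 1 a, x ^ j * (1 - (j : ℝ) / a) ^ k

section TiltedMoment

variable {x : ℝ} {a : ℕ}

lemma one_sub_div_mem_Icc {j : ℕ} (hj : j ≤ a) : 1 - (j : ℝ) / a ∈ Set.Icc (0 : ℝ) 1 :=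
  ⟨sub_nonneg.2 (div_le_one_of_le₀ (mod_cast hj) a.cast_nonneg), sub_le_self _ (by positivity)⟩

lemma tiltedMoment_zero (x : ℝ) (a : ℕ) : tiltedMoment x a 0 = ∑ j ∈ Icc 1 a, x ^ j := by
  simp [tiltedMoment]

lemma tiltedMoment_nonneg (hx : 0 ≤ x) (k : ℕ) : 0 ≤ tiltedMoment x a k :=
  sum_nonneg fun _ hj =>
    mul_nonneg (pow_nonneg hx _) (pow_nonneg (one_sub_div_mem_Icc (mem_Icc.1 hj).2).1 _)

lemma tiltedMoment_le_tiltedMoment_zero (hx : 0 ≤ x) (k : ℕ) :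
    tiltedMoment x a k ≤ tiltedMoment x a 0 := by
  rw [tiltedMoment_zero]
  refine sum_le_sum fun j hj => mul_le_of_le_one_right (pow_nonneg hx j) ?_
  obtain ⟨h0, h1⟩ := one_sub_div_mem_Icc (mem_Icc.1 hj).2
  exact pow_le_one₀ h0 h1

lemma sub_one_mul_sum_Icc_pow (x : ℝ) (a : ℕ) :
    (x - 1) * ∑ j ∈ Icc 1 a, x ^ j = x * (x ^ a - 1) := by
  have h := sub_one_mul_sum_Icc_pow_mul x (fun _ => 1) a
  simp only [mul_one, sub_self, mul_zero, sum_const_zero] at h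
  linear_combination h

lemma sub_one_mul_tiltedMoment_succ (x : ℝ) (ha : a ≠ 0) (k : ℕ) :
    (x - 1) * tiltedMoment x a (k + 1) =
      ∑ j ∈ Icc 1 a, x ^ j * ((1 - (j : ℝ) / a + 1 / a) ^ (k + 1) - (1 - (j : ℝ) / a) ^ (k + 1))
        - x := by
  have h := sub_one_mul_sum_Icc_pow_mul x (fun j => (1 - (j : ℝ) / a) ^ (k + 1)) a
  have shift : ∀ j ∈ Icc 1 a, 1 - ((j - 1 : ℕ) : ℝ) / a = 1 - (j : ℝ) / a + 1 / a := fun j hj => by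
    rw [Nat.cast_pred (mem_Icc.1 hj).1]
    ring
  rw [tiltedMoment, h, sum_congr rfl fun j hj => by rw [shift j hj]]
  simp [ha]

-- Summation by parts: `1 - j / a` drops by exactly `1 / a` from each index to the next.
lemma abs_mul_tiltedMoment_succ_sub_le (hx : 0 ≤ x) (ha : a ≠ 0) (k : ℕ) :
    |a * (x - 1) * tiltedMoment x a (k + 1) - (k + 1) * tiltedMoment x a k| ≤
      (k + 1) * k / a * tiltedMoment x a 0 + a * x := by
  have : (0 : ℝ) < a := by positivity
  set r : ℕ → ℝ := fun j => (1 - (j : ℝ) / a + 1 / a) ^ (k + 1) - (1 - (j : ℝ) / a) ^ (k + 1) -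
    (k + 1) * (1 / a) * (1 - (j : ℝ) / a) ^ k
  have decomposition : a * (x - 1) * tiltedMoment x a (k + 1) - (k + 1) * tiltedMoment x a k =
      a * ∑ j ∈ Icc 1 a, x ^ j * r j - a * x := by
    have hsum : ∑ j ∈ Icc 1 a, x ^ j * r j =
        (x - 1) * tiltedMoment x a (k + 1) + x - (k + 1) * (1 / a) * tiltedMoment x a k := by
      rw [sub_one_mul_tiltedMoment_succ x ha, tiltedMoment, mul_sum, sub_add_cancel,
        ← sum_sub_distrib]
      exact sum_congr rfl fun j _ => by ring
    rw [hsum]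
    field_simp
    ring
  have remainder (j : ℕ) (hj : j ∈ Icc 1 a) :
      |x ^ j * r j| ≤ (k + 1) * k * (1 / a) ^ 2 * x ^ j := by
    obtain ⟨hj1, hja⟩ := mem_Icc.1 hj
    have hle : 1 / (a : ℝ) ≤ j / a := by gcongr; exact_mod_cast hj1
    rw [abs_mul, abs_of_nonneg (pow_nonneg hx j), mul_comm]
    gcongr
    exact abs_add_pow_succ_sub_sub_le (one_sub_div_mem_Icc hja).1 (by positivity) (by linarith) k
  rw [decomposition]
  calc |a * ∑ j ∈ Icc 1 a, x ^ j * r j - a * x|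
      ≤ |a * ∑ j ∈ Icc 1 a, x ^ j * r j| + |a * x| := abs_sub _ _
    _ = a * |∑ j ∈ Icc 1 a, x ^ j * r j| + a * x := by
        rw [abs_mul, Nat.abs_cast, abs_of_nonneg (by positivity : 0 ≤ a * x)]
    _ ≤ a * ∑ j ∈ Icc 1 a, (k + 1) * k * (1 / a) ^ 2 * x ^ j + a * x := by
        gcongr
        exact (abs_sum_le_sum_abs _ _).trans (sum_le_sum remainder)
    _ = (k + 1) * k / a * tiltedMoment x a 0 + a * x := by
        rw [← mul_sum, tiltedMoment_zero]
        field_simp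

lemma sum_Icc_pow_div_eq (x : ℝ) (a K : ℕ) :
    ∑ j ∈ Icc 1 a, x ^ j / j = (∑ k ∈ range K, tiltedMoment x a k) / a +
      ∑ j ∈ Icc 1 a, x ^ j * (1 - (j : ℝ) / a) ^ K / j := by
  simp only [tiltedMoment]
  rw [sum_comm, sum_div, ← sum_add_distrib]
  refine sum_congr rfl fun j hj => ?_
  obtain ⟨hj1, hja⟩ := mem_Icc.1 hj
  have hj0 : (j : ℝ) ≠ 0 := by positivity
  have ha0 : (a : ℝ) ≠ 0 := Nat.cast_ne_zero.2 (by omega)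
  have geom := mul_neg_geom_sum (1 - (j : ℝ) / a) K
  rw [sub_sub_cancel, div_mul_eq_mul_div, div_eq_iff ha0] at geom
  rw [← mul_sum, ← sub_eq_iff_eq_add, div_sub_div_same, div_eq_div_iff hj0 ha0]
  linear_combination -x ^ j * geom

lemma sum_Icc_pow_mul_div_nonneg (hx : 0 ≤ x) (k : ℕ) :
    0 ≤ ∑ j ∈ Icc 1 a, x ^ j * (1 - (j : ℝ) / a) ^ k / j :=
  sum_nonneg fun _ hj => div_nonneg (mul_nonneg (pow_nonneg hx _)
    (pow_nonneg (one_sub_div_mem_Icc (mem_Icc.1 hj).2).1 _)) (Nat.cast_nonneg _)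

lemma sum_Icc_inv_le_one_add_log (a : ℕ) : ∑ j ∈ Icc 1 a, (j : ℝ)⁻¹ ≤ 1 + Real.log a := by
  simpa [harmonic_eq_sum_Icc] using harmonic_le_one_add_log a

-- For `a ≤ 2 * j` one has `1 / j ≤ 2 / a`; for `2 * j ≤ a` one has `x ^ j ≤ √(x ^ a)`.
lemma sum_Icc_pow_mul_div_le (hx : 1 ≤ x) (k : ℕ) :
    ∑ j ∈ Icc 1 a, x ^ j * (1 - (j : ℝ) / a) ^ k / j ≤
      2 / a * tiltedMoment x a k + √(x ^ a) * (1 + Real.log a) := by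
  have : 0 ≤ x := zero_le_one.trans hx
  have termwise (j : ℕ) (hj : j ∈ Icc 1 a) : x ^ j * (1 - (j : ℝ) / a) ^ k / j ≤
      2 / a * (x ^ j * (1 - (j : ℝ) / a) ^ k) + √(x ^ a) * (j : ℝ)⁻¹ := by
    obtain ⟨hj1, hja⟩ := mem_Icc.1 hj
    obtain ⟨h0, h1⟩ := one_sub_div_mem_Icc hja
    have hj0 : (0 : ℝ) < j := by positivity
    have ha0 : (0 : ℝ) < a := Nat.cast_pos.2 (hj1.trans hja)
    rw [div_eq_inv_mul, mul_comm √_]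
    rcases le_total a (2 * j) with h | h
    · have hinv : (j : ℝ)⁻¹ ≤ 2 / a := by
        rw [inv_eq_one_div, div_le_div_iff₀ hj0 ha0]
        exact_mod_cast (one_mul a).trans_le h
      have := mul_le_mul_of_nonneg_right hinv (by positivity : 0 ≤ x ^ j * (1 - (j : ℝ) / a) ^ k)
      exact this.trans (le_add_of_nonneg_right (by positivity))
    · have hpow : x ^ j * (1 - (j : ℝ) / a) ^ k ≤ √(x ^ a) := by
        refine (mul_le_of_le_one_right (by positivity) (pow_le_one₀ h0 h1)).trans ?_
        refine Real.le_sqrt_of_sq_le ?_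
        rw [← pow_mul]
        exact pow_le_pow_right₀ hx (by omega)
      have := mul_le_mul_of_nonneg_left hpow (by positivity : 0 ≤ (j : ℝ)⁻¹)
      exact this.trans (le_add_of_nonneg_left (by positivity))
  refine (sum_le_sum termwise).trans ?_
  rw [sum_add_distrib, ← mul_sum, ← mul_sum, tiltedMoment]
  gcongr
  exact sum_Icc_inv_le_one_add_log a

end TiltedMoment

lemma pos_of_exp_eq_one_add_mul {u ξ : ℝ} (hu : 1 < u) (hξ : ξ ≠ 0)
    (hexp : Real.exp ξ = 1 + u * ξ) : 0 < ξ := by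
  by_contra! hle
  have hneg : ξ < 0 := lt_of_le_of_ne hle hξ
  nlinarith [Real.add_one_le_exp ξ]

lemma le_of_exp_le_one_add_mul {u s ξ : ℝ} (hs : 0 < s) (hξ : 0 < ξ)
    (hsub : Real.exp s ≤ 1 + u * s) (hexp : Real.exp ξ = 1 + u * ξ) : s ≤ ξ := by
  by_contra! hlt
  have secant := strictConvexOn_exp.secant_strict_mono (Set.mem_univ 0) (Set.mem_univ ξ)
    (Set.mem_univ s) hξ.ne' hs.ne' hlt
  rw [hexp, Real.exp_zero, sub_zero, sub_zero, add_sub_cancel_left, mul_div_cancel_right₀ _ hξ.ne',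
    lt_div_iff₀ hs] at secant
  linarith

lemma sub_le_two_mul_log_of_mul_le {u c s ξ : ℝ} (hs : 2 ≤ s) (hsξ : s ≤ ξ) (hc : 0 < c)
    (hsuper : u * s ≤ c * (Real.exp s - 1)) (hexp : Real.exp ξ = 1 + u * ξ) :
    ξ - s ≤ 2 * Real.log c := by
  have : 0 < s := by linarith
  have hξ0 : 0 < ξ := by linarith
  have hs1 : 0 < Real.exp s - 1 := by linarith [Real.add_one_le_exp s]
  have ratio : Real.exp (ξ - s) ≤ c * (ξ / s) := by
    have superadditive : Real.exp (ξ - s) * (Real.exp s - 1) ≤ Real.exp ξ - 1 := by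
      have : Real.exp (ξ - s) * Real.exp s = Real.exp ξ := by rw [← Real.exp_add, sub_add_cancel]
      linarith [Real.one_le_exp (sub_nonneg.2 hsξ)]
    have scaled : Real.exp ξ - 1 ≤ c * (ξ / s) * (Real.exp s - 1) := by
      calc Real.exp ξ - 1 = u * s * (ξ / s) := by rw [hexp]; field_simp; ring
        _ ≤ c * (Real.exp s - 1) * (ξ / s) := by gcongr
        _ = c * (ξ / s) * (Real.exp s - 1) := by ring
    exact le_of_mul_le_mul_right (superadditive.trans scaled) hs1
  have hlog : ξ - s ≤ Real.log c + Real.log (ξ / s) := by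
    rw [← Real.log_mul hc.ne' (by positivity)]
    exact (Real.le_log_iff_exp_le (by positivity)).2 ratio
  have hhalf : Real.log (ξ / s) ≤ (ξ - s) / 2 := by
    calc Real.log (ξ / s) ≤ ξ / s - 1 := Real.log_le_sub_one_of_pos (by positivity)
      _ = (ξ - s) / s := by field_simp
      _ ≤ (ξ - s) / 2 := div_le_div_of_nonneg_left (sub_nonneg.2 hsξ) two_pos hs
  linarith

lemma one_lt_of_lt_sum_Icc_pow {x : ℝ} {a : ℕ} (hx : 0 ≤ x) (h : (a : ℝ) < ∑ j ∈ Icc 1 a, x ^ j) :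
    1 < x := by
  by_contra! hx1
  have : ∑ j ∈ Icc 1 a, x ^ j ≤ a := by
    simpa using sum_le_card_nsmul (Icc 1 a) (x ^ ·) 1 fun _ _ => pow_le_one₀ hx hx1
  linarith

lemma mul_log_le_log_sum_Icc_pow {x : ℝ} {a : ℕ} (hx : 0 < x) (ha : a ≠ 0) :
    a * Real.log x ≤ Real.log (∑ j ∈ Icc 1 a, x ^ j) := by
  rw [← Real.log_pow]
  exact Real.log_le_log (pow_pos hx a) <| single_le_sum (f := (x ^ ·))
    (fun j _ => pow_nonneg hx.le j) (mem_Icc.2 ⟨Nat.one_le_iff_ne_zero.2 ha, le_rfl⟩)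

lemma log_sum_Icc_pow_div_le_mul_log {x : ℝ} {a : ℕ} (hx : 1 ≤ x) (ha : a ≠ 0) :
    Real.log ((∑ j ∈ Icc 1 a, x ^ j) / a) ≤ a * Real.log x := by
  have hx0 : 0 < x := zero_lt_one.trans_le hx
  have ha0 : (0 : ℝ) < a := by positivity
  have hsum : ∑ j ∈ Icc 1 a, x ^ j ≤ a * x ^ a := by
    simpa using sum_le_card_nsmul (Icc 1 a) (x ^ ·) (x ^ a) fun j hj =>
      pow_le_pow_right₀ hx (mem_Icc.1 hj).2
  rw [← Real.log_pow]
  refine Real.log_le_log (div_pos ?_ ha0) ((div_le_iff₀' ha0).2 hsum)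
  exact sum_pos (fun j _ => pow_pos hx0 j) (nonempty_Icc.2 (Nat.one_le_iff_ne_zero.2 ha))

/-- `x` and `ξ` are saddle points for the parameters `a` and `n`: `x` solves
`∑ j ∈ Icc 1 a, x ^ j = n` and `ξ` is the positive solution of `exp ξ = 1 + (n / a) * ξ`.
The bounds on `x` and on `a * log x`, which approximates `ξ`, single out the range in which the
estimates below are uniform. -/
structure IsSaddlePair (a : ℕ) (n x ξ : ℝ) : Prop where
  one_lt : 1 < x
  le_two : x ≤ 2
  two_le_mul_log : 2 ≤ a * Real.log x
  sum_eq : ∑ j ∈ Icc 1 a, x ^ j = n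
  xi_pos : 0 < ξ
  exp_xi : Real.exp ξ = 1 + n / a * ξ

namespace IsSaddlePair

variable {a : ℕ} {n x ξ : ℝ}

lemma a_ne_zero (h : IsSaddlePair a n x ξ) : a ≠ 0 := by
  rintro rfl
  simpa using two_pos.trans_le h.two_le_mul_log

lemma a_pos (h : IsSaddlePair a n x ξ) : (0 : ℝ) < a :=
  Nat.cast_pos.2 (Nat.pos_of_ne_zero h.a_ne_zero)

lemma exp_mul_log (h : IsSaddlePair a n x ξ) : Real.exp (a * Real.log x) = x ^ a := by
  rw [← Real.log_pow, Real.exp_log (pow_pos (zero_lt_one.trans h.one_lt) a)]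

lemma a_le_n (h : IsSaddlePair a n x ξ) : (a : ℝ) ≤ n := by
  have := card_nsmul_le_sum (Icc 1 a) (x ^ ·) 1 fun j _ => one_le_pow₀ h.one_lt.le
  simpa [h.sum_eq] using this

lemma n_pos (h : IsSaddlePair a n x ξ) : 0 < n :=
  h.a_pos.trans_le h.a_le_n

lemma mul_log_le_log (h : IsSaddlePair a n x ξ) : a * Real.log x ≤ Real.log n := by
  simpa only [h.sum_eq] using mul_log_le_log_sum_Icc_pow (zero_lt_one.trans h.one_lt) h.a_ne_zero

lemma two_le_log (h : IsSaddlePair a n x ξ) : 2 ≤ Real.log n :=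
  h.two_le_mul_log.trans h.mul_log_le_log

lemma pow_le_one_add (h : IsSaddlePair a n x ξ) : x ^ a ≤ 1 + n / a * (a * Real.log x) := by
  have hx0 := zero_lt_one.trans h.one_lt
  have geom := sub_one_mul_sum_Icc_pow x a
  rw [h.sum_eq] at geom
  have hlog : n * (1 - x⁻¹) ≤ n * Real.log x :=
    mul_le_mul_of_nonneg_left (Real.one_sub_inv_le_log_of_pos hx0) h.n_pos.le
  calc x ^ a = 1 + n * (1 - x⁻¹) := by field_simp; linarith
    _ ≤ 1 + n * Real.log x := by linarith
    _ = 1 + n / a * (a * Real.log x) := by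
        have := h.a_pos
        field_simp

lemma mul_log_le_mul_pow_sub_one (h : IsSaddlePair a n x ξ) :
    n / a * (a * Real.log x) ≤ x * (x ^ a - 1) := by
  have ha := h.a_pos
  rw [← sub_one_mul_sum_Icc_pow, h.sum_eq, ← mul_assoc, div_mul_cancel₀ _ ha.ne', mul_comm]
  exact mul_le_mul_of_nonneg_right
    (Real.log_le_sub_one_of_pos (zero_lt_one.trans h.one_lt)) h.n_pos.le

lemma mul_log_le_xi (h : IsSaddlePair a n x ξ) : a * Real.log x ≤ ξ :=
  le_of_exp_le_one_add_mul (two_pos.trans_le h.two_le_mul_log) h.xi_pos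
    (h.exp_mul_log.trans_le h.pow_le_one_add) h.exp_xi

lemma xi_sub_mul_log_le (h : IsSaddlePair a n x ξ) : ξ - a * Real.log x ≤ 2 * Real.log x := by
  refine sub_le_two_mul_log_of_mul_le h.two_le_mul_log h.mul_log_le_xi
    (zero_lt_one.trans h.one_lt) ?_ h.exp_xi
  rw [h.exp_mul_log]
  exact h.mul_log_le_mul_pow_sub_one

lemma log_div_le_xi (h : IsSaddlePair a n x ξ) : Real.log (n / a) ≤ ξ := by
  rw [← h.sum_eq]
  exact (log_sum_Icc_pow_div_le_mul_log h.one_lt.le h.a_ne_zero).trans h.mul_log_le_xi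

lemma xi_le (h : IsSaddlePair a n x ξ) : ξ ≤ 3 * Real.log n := by
  have ha : (1 : ℝ) ≤ a := Nat.one_le_cast.2 (Nat.one_le_iff_ne_zero.2 h.a_ne_zero)
  have hlog : Real.log x ≤ a * Real.log x :=
    le_mul_of_one_le_left (Real.log_nonneg h.one_lt.le) ha
  linarith [h.xi_sub_mul_log_le, h.mul_log_le_log]

lemma abs_mul_sub_one_sub_xi_le (h : IsSaddlePair a n x ξ) :
    |a * (x - 1) - ξ| ≤ 2 * (Real.log n ^ 2 * (a : ℝ)⁻¹) := by
  have ha := h.a_pos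
  have hx0 := zero_lt_one.trans h.one_lt
  have hlog0 := Real.log_nonneg h.one_lt.le
  have sub_one_le : x - 1 ≤ x * Real.log x := by
    have := mul_le_mul_of_nonneg_left (Real.one_sub_inv_le_log_of_pos hx0) hx0.le
    rwa [mul_sub, mul_inv_cancel₀ hx0.ne', mul_one] at this
  have sub_log_le : x - 1 - Real.log x ≤ 2 * Real.log x ^ 2 := by nlinarith [h.le_two]
  have hξ := h.xi_sub_mul_log_le
  have hξ' := h.mul_log_le_xi
  have hμ : a * (x - 1) - a * Real.log x ≤ 2 * (a * Real.log x ^ 2) := by nlinarith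
  have hμ' : a * Real.log x ≤ a * (x - 1) := by gcongr; exact Real.log_le_sub_one_of_pos hx0
  have hlog : 2 * Real.log x ≤ 2 * (a * Real.log x ^ 2) := by nlinarith [h.two_le_mul_log]
  calc |a * (x - 1) - ξ| ≤ 2 * (a * Real.log x ^ 2) := abs_le.2 ⟨by linarith, by linarith⟩
    _ = 2 * ((a * Real.log x) ^ 2 * (a : ℝ)⁻¹) := by field_simp
    _ ≤ 2 * (Real.log n ^ 2 * (a : ℝ)⁻¹) := by gcongr; exact h.mul_log_le_log

lemma tiltedMoment_zero_eq (h : IsSaddlePair a n x ξ) : tiltedMoment x a 0 = n :=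
  (tiltedMoment_zero x a).trans h.sum_eq

lemma tiltedMoment_div_mem_Icc (h : IsSaddlePair a n x ξ) (k : ℕ) :
    tiltedMoment x a k / n ∈ Set.Icc (0 : ℝ) 1 := by
  have hx0 := zero_le_one.trans h.one_lt.le
  refine ⟨div_nonneg (tiltedMoment_nonneg hx0 k) h.n_pos.le, div_le_one_of_le₀ ?_ h.n_pos.le⟩
  exact (tiltedMoment_le_tiltedMoment_zero hx0 k).trans_eq h.tiltedMoment_zero_eq

lemma abs_mul_tiltedMoment_succ_div_sub_le (h : IsSaddlePair a n x ξ) (k : ℕ) :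
    |a * (x - 1) * (tiltedMoment x a (k + 1) / n) - (k + 1) * (tiltedMoment x a k / n)| ≤
      (k + 1) * k * (a : ℝ)⁻¹ + 2 * (a / n) := by
  have hn := h.n_pos
  have bound := abs_mul_tiltedMoment_succ_sub_le (zero_le_one.trans h.one_lt.le) h.a_ne_zero k
  rw [h.tiltedMoment_zero_eq] at bound
  calc _ = |a * (x - 1) * tiltedMoment x a (k + 1) - (k + 1) * tiltedMoment x a k| / n := by
        rw [← mul_div_assoc, ← mul_div_assoc, ← sub_div, abs_div, abs_of_pos hn]
    _ ≤ ((k + 1) * k / a * n + a * 2) / n := by grw [bound, h.le_two]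
    _ = (k + 1) * k * (a : ℝ)⁻¹ + 2 * (a / n) := by field_simp

lemma sqrt_pow_div_le (h : IsSaddlePair a n x ξ) :
    √(x ^ a) / (n / a) ≤ √(2 * (Real.log n * (a / n))) := by
  have ha := h.a_pos
  have hn := h.n_pos
  have one_le : 1 ≤ n / a * (a * Real.log x) := by
    have := Real.add_one_le_exp (a * Real.log x)
    rw [h.exp_mul_log] at this
    linarith [h.pow_le_one_add, h.two_le_mul_log]
  refine Real.le_sqrt_of_sq_le ?_
  rw [div_pow, Real.sq_sqrt (pow_nonneg (zero_le_one.trans h.one_lt.le) a)]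
  calc x ^ a / (n / a) ^ 2 ≤ 2 * (n / a * Real.log n) / (n / a) ^ 2 := by
        gcongr
        have : n / a * (a * Real.log x) ≤ n / a * Real.log n := by gcongr; exact h.mul_log_le_log
        linarith [h.pow_le_one_add]
    _ = 2 * (Real.log n * (a / n)) := by field_simp

lemma remainder_div_le (h : IsSaddlePair a n x ξ) (k : ℕ) :
    (∑ j ∈ Icc 1 a, x ^ j * (1 - (j : ℝ) / a) ^ k / j) / (n / a) ≤
      2 * (tiltedMoment x a k / n) +
        √(2 * (Real.log n * (a / n))) * (2 * Real.log n) := by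
  have ha := h.a_pos
  have hn := h.n_pos
  have hlog : 1 + Real.log a ≤ 2 * Real.log n := by
    linarith [Real.log_le_log ha h.a_le_n, h.two_le_log]
  have hlog0 : 0 ≤ 2 * Real.log n := by linarith [h.two_le_log]
  calc _ ≤ (2 / a * tiltedMoment x a k + √(x ^ a) * (2 * Real.log n)) / (n / a) := by
        grw [sum_Icc_pow_mul_div_le h.one_lt.le k, hlog]
    _ = 2 * (tiltedMoment x a k / n) + √(x ^ a) / (n / a) * (2 * Real.log n) := by field_simp
    _ ≤ _ := by grw [h.sqrt_pow_div_le]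

lemma sum_Icc_pow_div_sub_eq (h : IsSaddlePair a n x ξ) (c : ℕ → ℝ) (K : ℕ) :
    ∑ j ∈ Icc 1 a, x ^ j / j - n / a * ∑ k ∈ range K, c k =
      n / a * (∑ k ∈ range K, (tiltedMoment x a k / n - c k) +
        (∑ j ∈ Icc 1 a, x ^ j * (1 - (j : ℝ) / a) ^ K / j) / (n / a)) := by
  have ha := h.a_pos
  have hn := h.n_pos
  rw [sum_Icc_pow_div_eq x a K, sum_sub_distrib, ← sum_div]
  field_simp
  ring

end IsSaddlePair

section SuperpolynomialDecay

variable {ι : Type*} {l : Filter ι} {k f g : ι → ℝ}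

lemma superpolynomialDecay_of_eventually_abs_le (hf : SuperpolynomialDecay l k f)
    (hgf : ∀ᶠ i in l, |g i| ≤ f i) : SuperpolynomialDecay l k g :=
  hf.trans_eventually_abs_le (hgf.mono fun _ hi => hi.trans (le_abs_self _))

lemma superpolynomialDecay_sqrt (hf : SuperpolynomialDecay l k f) :
    SuperpolynomialDecay l k fun i => √(f i) := by
  refine (superpolynomialDecay_iff_abs_tendsto_zero _ _ _).2 fun N => ?_
  have hsqrt := (hf (N * 2)).sqrt
  rw [Real.sqrt_zero] at hsqrt
  refine hsqrt.congr fun i => ?_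
  rw [pow_mul, Real.sqrt_mul (sq_nonneg _), Real.sqrt_sq_eq_abs, abs_mul,
    abs_of_nonneg (Real.sqrt_nonneg _)]

lemma isLittleO_inv_pow_of_superpolynomialDecay (hf : SuperpolynomialDecay l k f)
    (hgk : g =O[l] k) (hg : ∀ᶠ i in l, g i ≠ 0) (N : ℕ) : f =o[l] fun i => (g i ^ N)⁻¹ := by
  refine (isLittleO_iff_tendsto' (hg.mono fun i hi h0 => absurd h0 (by positivity))).2 ?_
  simp only [div_inv_eq_mul]
  refine ((isBigO_refl f l).mul (hgk.pow N)).trans_tendsto ?_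
  simpa only [mul_comm] using hf N

end SuperpolynomialDecay

section Asymptotics

variable {ι : Type*} {l : Filter ι} {a : ι → ℕ} {n x ξ : ι → ℝ}

lemma superpolynomialDecay_mul_sub_one_sub_xi
    (hinv : SuperpolynomialDecay l (fun i => Real.log (n i)) fun i => (a i : ℝ)⁻¹)
    (hpair : ∀ᶠ i in l, IsSaddlePair (a i) (n i) (x i) (ξ i)) :
    SuperpolynomialDecay l (fun i => Real.log (n i)) fun i => a i * (x i - 1) - ξ i :=
  superpolynomialDecay_of_eventually_abs_le ((hinv.param_pow_mul 2).const_mul 2)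
    (hpair.mono fun _ hi => hi.abs_mul_sub_one_sub_xi_le)

lemma superpolynomialDecay_xi_mul_tiltedMoment_succ_sub
    (hinv : SuperpolynomialDecay l (fun i => Real.log (n i)) fun i => (a i : ℝ)⁻¹)
    (hdiv : SuperpolynomialDecay l (fun i => Real.log (n i)) fun i => a i / n i)
    (hpair : ∀ᶠ i in l, IsSaddlePair (a i) (n i) (x i) (ξ i)) (k : ℕ) :
    SuperpolynomialDecay l (fun i => Real.log (n i)) fun i =>
      ξ i * (tiltedMoment (x i) (a i) (k + 1) / n i) -
        (k + 1) * (tiltedMoment (x i) (a i) k / n i) := by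
  have recurrence := superpolynomialDecay_of_eventually_abs_le
    ((hinv.const_mul ((k + 1) * k)).add (hdiv.const_mul 2))
    (hpair.mono fun i hi => hi.abs_mul_tiltedMoment_succ_div_sub_le k)
  have perturbation : SuperpolynomialDecay l (fun i => Real.log (n i)) fun i =>
      (a i * (x i - 1) - ξ i) * (tiltedMoment (x i) (a i) (k + 1) / n i) := by
    refine (superpolynomialDecay_mul_sub_one_sub_xi hinv hpair).trans_eventually_abs_le ?_
    filter_upwards [hpair] with i hi
    obtain ⟨h0, h1⟩ := hi.tiltedMoment_div_mem_Icc (k + 1)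
    simp only [Function.comp_apply]
    rw [abs_mul, abs_of_nonneg h0]
    exact mul_le_of_le_one_right (abs_nonneg _) h1
  refine (recurrence.add (perturbation.const_mul (-1))).congr fun i => ?_
  simp only [Pi.add_apply]
  ring

lemma superpolynomialDecay_tiltedMoment_sub
    (hinv : SuperpolynomialDecay l (fun i => Real.log (n i)) fun i => (a i : ℝ)⁻¹)
    (hdiv : SuperpolynomialDecay l (fun i => Real.log (n i)) fun i => a i / n i)
    (hpair : ∀ᶠ i in l, IsSaddlePair (a i) (n i) (x i) (ξ i)) (k : ℕ) :
    SuperpolynomialDecay l (fun i => Real.log (n i)) fun i =>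
      tiltedMoment (x i) (a i) k / n i - (k.factorial : ℝ) / ξ i ^ k := by
  induction k with
  | zero =>
    refine (superpolynomialDecay_zero _ _).congr' (hpair.mono fun i hi => ?_)
    simp [hi.tiltedMoment_zero_eq, hi.n_pos.ne']
  | succ k ih =>
    have recurrence := superpolynomialDecay_xi_mul_tiltedMoment_succ_sub hinv hdiv hpair k
    refine (recurrence.add (ih.const_mul (k + 1))).trans_eventually_abs_le ?_
    filter_upwards [hpair] with i hi
    have hξ : 1 ≤ ξ i := by linarith [hi.two_le_mul_log, hi.mul_log_le_xi]
    have factor : ξ i * (tiltedMoment (x i) (a i) (k + 1) / n i) -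
        (k + 1) * (tiltedMoment (x i) (a i) k / n i) +
        (k + 1) * (tiltedMoment (x i) (a i) k / n i - (k.factorial : ℝ) / ξ i ^ k) =
        ξ i * (tiltedMoment (x i) (a i) (k + 1) / n i -
          ((k + 1).factorial : ℝ) / ξ i ^ (k + 1)) := by
      rw [Nat.factorial_succ, pow_succ]
      push_cast
      field_simp [hi.xi_pos.ne']
      ring
    simp only [Function.comp_apply, Pi.add_apply]
    rw [factor, abs_mul, abs_of_pos hi.xi_pos]
    exact le_mul_of_one_le_left (abs_nonneg _) hξ

lemma isLittleO_inv_xi_pow {f : ι → ℝ}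
    (hf : SuperpolynomialDecay l (fun i => Real.log (n i)) f)
    (hpair : ∀ᶠ i in l, IsSaddlePair (a i) (n i) (x i) (ξ i)) (N : ℕ) :
    f =o[l] fun i => (ξ i ^ N)⁻¹ := by
  refine isLittleO_inv_pow_of_superpolynomialDecay hf ?_ (hpair.mono fun i hi => hi.xi_pos.ne') N
  refine IsBigO.of_bound 3 (hpair.mono fun i hi => ?_)
  rw [Real.norm_of_nonneg hi.xi_pos.le]
  exact hi.xi_le.trans (by gcongr; exact le_abs_self _)

lemma isLittleO_tiltedMoment_succ_div
    (hinv : SuperpolynomialDecay l (fun i => Real.log (n i)) fun i => (a i : ℝ)⁻¹)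
    (hdiv : SuperpolynomialDecay l (fun i => Real.log (n i)) fun i => a i / n i)
    (hpair : ∀ᶠ i in l, IsSaddlePair (a i) (n i) (x i) (ξ i)) (hξ : Tendsto ξ l atTop) (N : ℕ) :
    (fun i => tiltedMoment (x i) (a i) (N + 1) / n i) =o[l] fun i => (ξ i ^ N)⁻¹ := by
  have main : (fun i => ((N + 1).factorial : ℝ) / ξ i ^ (N + 1)) =o[l] fun i => (ξ i ^ N)⁻¹ := by
    have hinvξ : (fun i => ((N + 1).factorial : ℝ) / ξ i) =o[l] fun _ => (1 : ℝ) :=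
      (isLittleO_one_iff ℝ).2 (hξ.const_div_atTop _)
    refine (hinvξ.mul_isBigO (isBigO_refl (fun i => (ξ i ^ N)⁻¹) l)).congr (fun i => ?_) fun i => ?_
    · rw [pow_succ', ← div_div, ← div_eq_mul_inv]
    · exact one_mul _
  have error := superpolynomialDecay_tiltedMoment_sub hinv hdiv hpair (N + 1)
  simpa only [sub_add_cancel] using (isLittleO_inv_xi_pow error hpair N).add main

lemma isLittleO_remainder_div
    (hinv : SuperpolynomialDecay l (fun i => Real.log (n i)) fun i => (a i : ℝ)⁻¹)
    (hdiv : SuperpolynomialDecay l (fun i => Real.log (n i)) fun i => a i / n i)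
    (hpair : ∀ᶠ i in l, IsSaddlePair (a i) (n i) (x i) (ξ i)) (hξ : Tendsto ξ l atTop) (N : ℕ) :
    (fun i => (∑ j ∈ Icc 1 (a i), x i ^ j * (1 - (j : ℝ) / a i) ^ (N + 1) / j) / (n i / a i))
      =o[l] fun i => (ξ i ^ N)⁻¹ := by
  have small_indices : SuperpolynomialDecay l (fun i => Real.log (n i)) fun i =>
      √(2 * (Real.log (n i) * (a i / n i))) * (2 * Real.log (n i)) :=
    ((superpolynomialDecay_sqrt (hdiv.param_mul.const_mul 2)).mul_param.const_mul 2).congr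
      fun i => mul_left_comm _ _ _
  refine IsBigO.trans_isLittleO ?_
    (((isLittleO_tiltedMoment_succ_div hinv hdiv hpair hξ N).const_mul_left 2).add
      (isLittleO_inv_xi_pow small_indices hpair N))
  refine IsBigO.of_norm_eventuallyLE (hpair.mono fun i hi => ?_)
  beta_reduce
  rw [Real.norm_of_nonneg (div_nonneg (sum_Icc_pow_mul_div_nonneg
    (zero_le_one.trans hi.one_lt.le) _) (div_pos hi.n_pos hi.a_pos).le)]
  exact hi.remainder_div_le (N + 1)

lemma isLittleO_sum_Icc_pow_div_sub
    (hinv : SuperpolynomialDecay l (fun i => Real.log (n i)) fun i => (a i : ℝ)⁻¹)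
    (hdiv : SuperpolynomialDecay l (fun i => Real.log (n i)) fun i => a i / n i)
    (hpair : ∀ᶠ i in l, IsSaddlePair (a i) (n i) (x i) (ξ i)) (hξ : Tendsto ξ l atTop) (N : ℕ) :
    (fun i => ∑ j ∈ Icc 1 (a i), x i ^ j / j -
        n i / a i * ∑ k ∈ range (N + 1), (k.factorial : ℝ) / ξ i ^ k)
      =o[l] fun i => n i / a i / ξ i ^ N := by
  have moments : (fun i => ∑ k ∈ range (N + 1),
      (tiltedMoment (x i) (a i) k / n i - (k.factorial : ℝ) / ξ i ^ k))
      =o[l] fun i => (ξ i ^ N)⁻¹ :=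
    IsLittleO.fun_sum fun k _ => isLittleO_inv_xi_pow
      (superpolynomialDecay_tiltedMoment_sub hinv hdiv hpair k) hpair N
  refine ((isBigO_refl (fun i => n i / a i) l).mul_isLittleO
    (moments.add (isLittleO_remainder_div hinv hdiv hpair hξ N))).congr' ?_ ?_
  · exact hpair.mono fun i hi => (hi.sum_Icc_pow_div_sub_eq _ _).symm
  · exact .of_forall fun i => (div_eq_mul_inv _ _).symm

lemma eventually_isSaddlePair
    (hinv : SuperpolynomialDecay l (fun i => Real.log (n i)) fun i => (a i : ℝ)⁻¹)
    (hu : Tendsto (fun i => n i / a i) l atTop)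
    (ha : ∀ᶠ i in l, a i ≠ 0)
    (hx : ∀ᶠ i in l, 0 < x i ∧ ∑ j ∈ Icc 1 (a i), x i ^ j = n i)
    (hξ : ∀ᶠ i in l, ξ i ≠ 0 ∧ Real.exp (ξ i) = 1 + n i / a i * ξ i) :
    ∀ᶠ i in l, IsSaddlePair (a i) (n i) (x i) (ξ i) := by
  have hratio : Tendsto (fun i => Real.log (n i) * (a i : ℝ)⁻¹) l (𝓝 0) := by simpa using hinv 1
  filter_upwards [ha, hx, hξ, hu.eventually_gt_atTop 1,
    (Real.tendsto_log_atTop.comp hu).eventually_ge_atTop 2,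
    hratio.eventually_le_const (Real.log_pos one_lt_two)]
    with i ha ⟨hx0, hsum⟩ ⟨hξ0, hexp⟩ hu1 hu2 hlog
  have ha0 : (0 : ℝ) < a i := by positivity
  have hx1 : 1 < x i := one_lt_of_lt_sum_Icc_pow hx0.le (hsum ▸ (one_lt_div ha0).1 hu1)
  have lower := log_sum_Icc_pow_div_le_mul_log hx1.le ha
  have upper := mul_log_le_log_sum_Icc_pow hx0 ha
  rw [hsum] at lower upper
  refine ⟨hx1, ?_, hu2.trans lower, hsum, pos_of_exp_eq_one_add_mul hu1 hξ0 hexp, hexp⟩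
  refine (Real.log_le_log_iff hx0 two_pos).1 (le_trans ?_ hlog)
  rwa [← div_eq_mul_inv, le_div_iff₀' ha0]

theorem stmt_1_general
    (hinv : SuperpolynomialDecay l (fun i => Real.log (n i)) fun i => (a i : ℝ)⁻¹)
    (hdiv : SuperpolynomialDecay l (fun i => Real.log (n i)) fun i => a i / n i)
    (ha : ∀ᶠ i in l, a i ≠ 0)
    (hx : ∀ᶠ i in l, 0 < x i ∧ ∑ j ∈ Icc 1 (a i), x i ^ j = n i)
    {ξ : ℝ → ℝ} (hξ : ∀ᶠ u in atTop, ξ u ≠ 0 ∧ Real.exp (ξ u) = 1 + u * ξ u) (N : ℕ) :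
    (fun i => ∑ j ∈ Icc 1 (a i), x i ^ j / j -
        n i / a i * ∑ k ∈ range (N + 1), (k.factorial : ℝ) / ξ (n i / a i) ^ k)
      =o[l] fun i => n i / a i / ξ (n i / a i) ^ N := by
  have hu : Tendsto (fun i => n i / a i) l atTop := by
    have hdiv0 : Tendsto (fun i => a i / n i) l (𝓝 0) := by simpa using hdiv 0
    have hpos : ∀ᶠ i in l, a i / n i ∈ Set.Ioi (0 : ℝ) := by
      filter_upwards [ha, hx] with i ha ⟨hx0, hsum⟩
      have hn : 0 < n i := hsum ▸ sum_pos (fun j _ => pow_pos hx0 j)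
        (nonempty_Icc.2 (Nat.one_le_iff_ne_zero.2 ha))
      exact div_pos (by positivity) hn
    simpa only [Pi.inv_def, inv_div] using
      (tendsto_nhdsWithin_iff.2 ⟨hdiv0, hpos⟩).inv_tendsto_nhdsGT_zero
  have hpair := eventually_isSaddlePair hinv hu ha hx (hu.eventually hξ)
  refine isLittleO_sum_Icc_pow_div_sub hinv hdiv hpair ?_ N
  exact tendsto_atTop_mono' l (hpair.mono fun i hi => hi.log_div_le_xi)
    (Real.tendsto_log_atTop.comp hu)

end Asymptotics

lemma superpolynomialDecay_log_rpow_neg {δ : ℝ} (hδ : 0 < δ) :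
    SuperpolynomialDecay atTop (fun n : ℕ => Real.log n) fun n : ℕ => (n : ℝ) ^ (-δ) := by
  intro k
  refine ((isLittleO_log_rpow_rpow_atTop k hδ).tendsto_div_nhds_zero.comp
    tendsto_natCast_atTop_atTop).congr fun n => ?_
  simp only [Function.comp_apply, Real.rpow_natCast, Real.rpow_neg n.cast_nonneg, div_eq_mul_inv]

lemma superpolynomialDecay_log_inv_of_tendsto_rpow_neg_mul {f : ℕ → ℝ} {δ : ℝ} (hδ : 0 < δ)
    (hf : Tendsto (fun n : ℕ => (n : ℝ) ^ (-δ) * f n) atTop atTop) :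
    SuperpolynomialDecay atTop (fun n : ℕ => Real.log n) fun n => (f n)⁻¹ := by
  refine superpolynomialDecay_of_eventually_abs_le (superpolynomialDecay_log_rpow_neg hδ) ?_
  filter_upwards [hf.eventually_ge_atTop 1] with n hn
  have hfn : 0 < f n := pos_of_mul_pos_right (zero_lt_one.trans_le hn) (by positivity)
  rwa [abs_of_pos (inv_pos.2 hfn), inv_le_iff_one_le_mul₀ hfn]

lemma superpolynomialDecay_log_div_of_tendsto_rpow_neg_mul {f : ℕ → ℝ} {δ : ℝ} (hδ : δ < 1)
    (hf : Tendsto (fun n : ℕ => (n : ℝ) ^ (-δ) * f n) atTop (𝓝 0)) :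
    SuperpolynomialDecay atTop (fun n : ℕ => Real.log n) fun n => f n / n := by
  refine superpolynomialDecay_of_eventually_abs_le
    (superpolynomialDecay_log_rpow_neg (sub_pos.2 hδ)) ?_
  have hnorm : ∀ᶠ n : ℕ in atTop, |(n : ℝ) ^ (-δ) * f n| ≤ 1 :=
    hf.abs.eventually_le_const (by simp)
  filter_upwards [hnorm, eventually_gt_atTop 0] with n hfn hn
  have hn0 : (0 : ℝ) < n := Nat.cast_pos.2 hn
  rw [abs_mul, abs_of_pos (Real.rpow_pos_of_pos hn0 _)] at hfn
  calc |f n / n| = (n : ℝ) ^ (-δ) * |f n| * (n : ℝ) ^ (-(1 - δ)) := by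
        rw [mul_right_comm, ← Real.rpow_add hn0, abs_div, Nat.abs_cast, div_eq_inv_mul,
          ← Real.rpow_neg_one]
        ring_nf
    _ ≤ (n : ℝ) ^ (-(1 - δ)) := mul_le_of_le_one_left (by positivity) hfn

open Filter Asymptotics in
/-- asymptotic expansion of the mean cycle number.  Assume there
are `α₀, α₁ ∈ (0,1)` with `n^{−α₀} α(n) → ∞` (i.e. the liminf is `∞`) and
`n^{−α₁} α(n) → 0` (i.e. the limsup of this nonnegative sequence is `0`).
Let `x n = x_{n,α}(1)` be the positive solution of `∑_{j=1}^{α(n)} x^j = n`,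
`m n = ∑_{j=1}^{α(n)} x(n)^j / j`, and let `ξ u` be the nonzero solution of
`exp ξ = 1 + u ξ` (for `u > 1`).  Then for every `N`,
`m n = (n/α(n)) ∑_{k=0}^{N} k! / ξ(n/α(n))^k + o((n/α(n)) ξ(n/α(n))^{−N})`. -/
theorem stmt_1 (α : ℕ → ℕ) (hα1 : ∀ n, 1 ≤ α n)
    (α₀ α₁ : ℝ) (h₀ : α₀ ∈ Set.Ioo (0 : ℝ) 1) (h₁ : α₁ ∈ Set.Ioo (0 : ℝ) 1)
    (hlo : Tendsto (fun n : ℕ => (n : ℝ) ^ (-α₀) * α n) atTop atTop)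
    (hhi : Tendsto (fun n : ℕ => (n : ℝ) ^ (-α₁) * α n) atTop (nhds 0))
    (x : ℕ → ℝ)
    (hx : ∀ n, 1 ≤ n → 0 < x n ∧ ∑ j ∈ Finset.Icc 1 (α n), x n ^ j = (n : ℝ))
    (m : ℕ → ℝ) (hm : ∀ n, m n = ∑ j ∈ Finset.Icc 1 (α n), x n ^ j / j)
    (ξ : ℝ → ℝ) (hξ : ∀ u : ℝ, 1 < u → ξ u ≠ 0 ∧ Real.exp (ξ u) = 1 + u * ξ u)
    (N : ℕ) :
    (fun n : ℕ => m n - (n : ℝ) / α n *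
        ∑ k ∈ Finset.range (N + 1), (k.factorial : ℝ) / ξ ((n : ℝ) / α n) ^ k)
      =o[atTop] fun n : ℕ => (n : ℝ) / α n / ξ ((n : ℝ) / α n) ^ N := by
  obtain rfl : m = fun n => ∑ j ∈ Finset.Icc 1 (α n), x n ^ j / j := funext hm
  exact stmt_1_general (superpolynomialDecay_log_inv_of_tendsto_rpow_neg_mul h₀.1 hlo)
    (superpolynomialDecay_log_div_of_tendsto_rpow_neg_mul h₁.2 hhi)
    (.of_forall fun n => Nat.one_le_iff_ne_zero.1 (hα1 n)) ((eventually_ge_atTop 1).mono hx)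
    ((eventually_gt_atTop 1).mono hξ) N
end
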